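/- arXiv:1705.02442 — 3 statements merged into one kernel-verified Lean document; each statement's English description precedes it below -/
import Mathlib

section
/- Let x ≥ y ≥ 2, let 0 < α ≤ 1, let 0 < d < 1 and T > 1 be such that z := (e^{2·T^{d−1}} − 1)^{−1} > 1, and set J₂ = ∫_{0}^{∞} exp( −t²/(2z²) − W(y,1,t) ) dt. Then Ψ( x·e^{T^{d−1}}, y ) − Ψ( x·e^{−T^{d−1}}, y ) ≤ e^{ α²/(2z²) − α·T^{d−1} } · x^α · ζ(α,y) · √(2e/π) · J₂/z. -/
/-!
The proof is a Gaussian-smoothed Rankin/Perron bound. Put `X = x e^{-δ}` with `δ = T^{d-1}`; the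
choice of `z` makes `x e^{δ} = X (1 + 1/z)`. Every `n` in `(X, X (1 + 1/z)]` satisfies
`0 < z log (n/X) ≤ 1`, so the number of `y`-smooth ones is at most `√e` times
`∑ exp (-z² log²(X/n) / 2)` over all `y`-smooth `n` (`Psi_sub_le`).

The Gaussian is the integral of `e^{s²/(2z²)} (X/n)^s` over the line `s = α + it`, up to the factor
`√(2π) z` (`integral_shifted_gaussian`). Exchanging sum and integral, which is legitimate because
`∑ n^{-α}` over smooth `n` converges, turns the sum into an integral of
`e^{s²/(2z²)} X^s ζ(s, y)`. Finally `|ζ(α + it, y)| ≤ ζ(α, y) e^{-W(y,1,t)}`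
(`norm_eulerProduct_le`), which holds factor by factor by an elementary convexity inequality
(`one_sub_sq_mul_exp_le`). The integrand being even, the integral over `ℝ` is `2 J₂`, and the
constants combine to `√e · 2 / √(2π) = √(2e/π)` (`gaussian_sum_le`).
-/

open MeasureTheory

/-- `Ψ(x,y)`: the number of positive integers `n ≤ x` all of whose prime
factors are at most `y` (i.e. `P(n) ≤ y`). -/
noncomputable def Psi (x y : ℝ) : ℕ :=
  ((Finset.Icc 1 ⌊x⌋₊).filter (fun n : ℕ => ∀ p ∈ n.primeFactors, (p : ℝ) ≤ y)).card

/-- `ζ(σ,y) = ∏_{p ≤ y, p prime} (1 - p^{-σ})⁻¹` for real `σ`. -/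
noncomputable def zetaR (s y : ℝ) : ℝ :=
  ∏ p ∈ (Finset.range (⌊y⌋₊ + 1)).filter Nat.Prime, (1 - (p : ℝ) ^ (-s))⁻¹

/-- `W(v,w,t) = ∑_{w < p ≤ v, p prime} (1 - cos(t log p))/p^α`. -/
noncomputable def W (α v w t : ℝ) : ℝ :=
  ∑ p ∈ (Finset.range (⌊v⌋₊ + 1)).filter (fun p : ℕ => Nat.Prime p ∧ w < (p : ℝ)),
    (1 - Real.cos (t * Real.log p)) / (p : ℝ) ^ α

/-! ### Bounding a single Euler factor -/

/-- With `c = cos θ` the right side is `|1 - r e^{iθ}|²`, so this is the squared form of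
`|1 - r e^{iθ}|⁻¹ ≤ (1 - r)⁻¹ e^{-r (1 - cos θ)}`. By convexity of `exp` in `c` it reduces to the
endpoints: `c = 1` is an equality, and `c = -1` says `e^{2r} ≤ (1 + r) / (1 - r)`. -/
lemma one_sub_sq_mul_exp_le {r c : ℝ} (hr0 : 0 < r) (hr1 : r < 1) (hc0 : -1 ≤ c) (hc1 : c ≤ 1) :
    (1 - r) ^ 2 * Real.exp (2 * r * (1 - c)) ≤ 1 - 2 * r * c + r ^ 2 := by
  have hlog := Real.sum_range_le_log_div hr0.le hr1 1
  simp only [Finset.sum_range_one] at hlog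
  norm_num at hlog
  have hq : 0 < (1 + r) / (1 - r) := div_pos (by linarith) (by linarith)
  have h4 : (1 - r) ^ 2 * Real.exp (4 * r) ≤ (1 + r) ^ 2 := by
    have h2 : Real.exp (2 * r) ≤ (1 + r) / (1 - r) :=
      (Real.le_log_iff_exp_le hq).1 (by linarith)
    rw [le_div_iff₀ (by linarith)] at h2
    have h3 : Real.exp (4 * r) = Real.exp (2 * r) ^ 2 := by
      rw [← Real.exp_nat_mul]; congr 1; push_cast; ring
    rw [h3, ← mul_pow]
    exact pow_le_pow_left₀ (mul_nonneg (by linarith) (Real.exp_pos _).le) (by linarith) 2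
  -- `2 r (1 - c)` is the convex combination of `0` and `4 r` with weight `(1 - c) / 2` on `4 r`
  have hconv := convexOn_exp.2 (Set.mem_univ 0) (Set.mem_univ (4 * r))
    (show 0 ≤ (1 + c) / 2 by linarith) (show 0 ≤ (1 - c) / 2 by linarith) (by ring)
  simp only [smul_eq_mul, mul_zero, zero_add, Real.exp_zero, mul_one] at hconv
  rw [show (1 - c) / 2 * (4 * r) = 2 * r * (1 - c) by ring] at hconv
  nlinarith [mul_le_mul_of_nonneg_left hconv (sq_nonneg (1 - r)),
    mul_le_mul_of_nonneg_left h4 (show 0 ≤ (1 - c) / 2 by linarith)]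

lemma natCast_cpow_eq {n : ℕ} (hn : n ≠ 0) (s : ℂ) :
    (n : ℂ) ^ (-s) = Complex.exp (-s * (Real.log n : ℝ)) := by
  rw [Complex.cpow_def_of_ne_zero (by exact_mod_cast hn), Complex.natCast_log, mul_comm]

lemma norm_natCast_cpow {n : ℕ} (hn : n ≠ 0) (α t : ℝ) :
    ‖(n : ℂ) ^ (-((α : ℂ) + t * Complex.I))‖ = (n : ℝ) ^ (-α) := by
  rw [Complex.norm_natCast_cpow_of_pos (Nat.pos_of_ne_zero hn)]
  simp

lemma rpow_neg_lt_one {p : ℕ} (hp : p.Prime) {α : ℝ} (hα : 0 < α) : (p : ℝ) ^ (-α) < 1 :=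
  Real.rpow_lt_one_of_one_lt_of_neg (by exact_mod_cast hp.one_lt) (by linarith)

/-- One Euler factor at `s = α + it` is bounded by its value at `α` times the
corresponding factor of `exp (-W)`. -/
lemma norm_eulerFactor_le {p : ℕ} (hp : p.Prime) {α : ℝ} (hα : 0 < α) (t : ℝ) :
    ‖(1 - (p : ℂ) ^ (-((α : ℂ) + t * Complex.I)))⁻¹‖ ≤
      (1 - (p : ℝ) ^ (-α))⁻¹ * Real.exp (-((1 - Real.cos (t * Real.log p)) / (p : ℝ) ^ α)) := by
  have hp0 : (0 : ℝ) < p := by exact_mod_cast hp.pos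
  set r : ℝ := (p : ℝ) ^ (-α) with hr
  have hr0 : 0 < r := Real.rpow_pos_of_pos hp0 _
  have hr1 : r < 1 := rpow_neg_lt_one hp hα
  set θ := t * Real.log p with hθ
  have hdiv : (1 - Real.cos θ) / (p : ℝ) ^ α = r * (1 - Real.cos θ) := by
    rw [hr, Real.rpow_neg hp0.le]; field_simp
  have hval : (p : ℂ) ^ (-((α : ℂ) + t * Complex.I)) = r * (Real.cos θ - Real.sin θ * Complex.I) := by
    rw [natCast_cpow_eq hp.ne_zero, hr, Real.rpow_def_of_pos hp0, Complex.ofReal_exp]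
    have : Complex.exp (((-θ : ℝ) : ℂ) * Complex.I) = Real.cos θ - Real.sin θ * Complex.I := by
      rw [Complex.exp_mul_I, ← Complex.ofReal_cos, ← Complex.ofReal_sin, Real.cos_neg, Real.sin_neg]
      push_cast; ring
    rw [← this, ← Complex.exp_add, hθ]
    congr 1; push_cast; ring
  have hnorm : ‖(1 : ℂ) - r * (Real.cos θ - Real.sin θ * Complex.I)‖ ^ 2
      = 1 - 2 * r * Real.cos θ + r ^ 2 := by
    rw [Complex.sq_norm, Complex.normSq_apply]
    simp only [Complex.sub_re, Complex.sub_im, Complex.mul_re, Complex.mul_im, Complex.ofReal_re,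
      Complex.ofReal_im, Complex.one_re, Complex.one_im, Complex.I_re, Complex.I_im]
    nlinarith [Real.sin_sq_add_cos_sq θ]
  have hkey := one_sub_sq_mul_exp_le hr0 hr1 (Real.neg_one_le_cos θ) (Real.cos_le_one θ)
  have hle : (1 - r) * Real.exp (r * (1 - Real.cos θ)) ≤
      ‖(1 : ℂ) - r * (Real.cos θ - Real.sin θ * Complex.I)‖ := by
    apply (sq_le_sq₀ (mul_nonneg (by linarith) (Real.exp_pos _).le) (norm_nonneg _)).1
    rw [hnorm, mul_pow, ← Real.exp_nat_mul, Nat.cast_ofNat, ← mul_assoc]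
    exact hkey
  rw [hdiv, hval, norm_inv, Real.exp_neg, ← mul_inv]
  exact inv_anti₀ (mul_pos (by linarith) (Real.exp_pos _)) hle

/-! ### The Dirichlet series over smooth numbers and its Euler product -/

/-- The Dirichlet series over `N`-smooth numbers (prime factors `< N`) converges absolutely
for every `α > 0`, since only finitely many primes occur, and equals its Euler product. -/
lemma smooth_summable_hasSum {α : ℝ} (hα : 0 < α) (t : ℝ) (N : ℕ) :
    Summable (fun m : N.smoothNumbers ↦ ((m : ℕ) : ℝ) ^ (-α)) ∧
    HasSum (fun m : N.smoothNumbers ↦ ((m : ℕ) : ℂ) ^ (-((α : ℂ) + t * Complex.I)))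
      (∏ p ∈ N.primesBelow, (1 - (p : ℂ) ^ (-((α : ℂ) + t * Complex.I)))⁻¹) := by
  have hs : (α : ℂ) + t * Complex.I ≠ 0 := by
    intro h
    have := congrArg Complex.re h
    simp at this
    linarith
  have h := EulerProduct.summable_and_hasSum_smoothNumbers_prod_primesBelow_geometric
    (f := (riemannZetaSummandHom hs : ℕ →* ℂ)) (fun {p} hp ↦ by
      change ‖(p : ℂ) ^ (-((α : ℂ) + t * Complex.I))‖ < 1
      rw [norm_natCast_cpow hp.ne_zero]
      exact rpow_neg_lt_one hp hα) N
  refine ⟨h.1.congr fun m ↦ ?_, h.2⟩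
  change ‖((m : ℕ) : ℂ) ^ (-((α : ℂ) + t * Complex.I))‖ = _
  rw [norm_natCast_cpow (Nat.ne_zero_of_mem_smoothNumbers m.2)]

/-! ### The Gaussian as a vertical-line integral -/

/-- The Gaussian `e^{-z²u²/2}` as a Mellin-type integral of `e^{s²/(2z²) + su}` along the
vertical line `Re s = α`. -/
lemma integral_shifted_gaussian {z : ℝ} (hz : 0 < z) (α u : ℝ) :
    ∫ t : ℝ, Complex.exp (((α : ℂ) + t * Complex.I) ^ 2 / (2 * z ^ 2) +
        ((α : ℂ) + t * Complex.I) * u) =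
      ((Real.sqrt (2 * Real.pi) * z * Real.exp (-(z * u) ^ 2 / 2) : ℝ) : ℂ) := by
  have hzc : (z : ℂ) ≠ 0 := by exact_mod_cast hz.ne'
  have h := integral_cexp_quadratic (b := ((-(1 / (2 * z ^ 2)) : ℝ) : ℂ))
    (by rw [Complex.ofReal_re]; exact neg_neg_of_pos (by positivity))
    (Complex.I * (α / z ^ 2 + u)) (α ^ 2 / (2 * z ^ 2) + α * u)
  have hroot : ((Real.pi : ℂ) / -((-(1 / (2 * z ^ 2)) : ℝ) : ℂ)) ^ (1 / 2 : ℂ) =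
      ((Real.sqrt (2 * Real.pi) * z : ℝ) : ℂ) := by
    have e1 : (Real.pi : ℂ) / -((-(1 / (2 * z ^ 2)) : ℝ) : ℂ) = ((2 * Real.pi * z ^ 2 : ℝ) : ℂ) := by
      push_cast; field_simp
    rw [e1, show (1 / 2 : ℂ) = ((1 / 2 : ℝ) : ℂ) by push_cast; rfl,
      ← Complex.ofReal_cpow (by positivity), ← Real.sqrt_eq_rpow,
      Real.sqrt_mul (by positivity), Real.sqrt_sq hz.le]
  rw [hroot] at h
  rw [Complex.ofReal_mul, Complex.ofReal_exp]
  convert h using 2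
  · ext t
    congr 1
    push_cast
    field_simp
    ring_nf
    simp only [Complex.I_sq]
    ring
  · congr 1
    push_cast
    field_simp
    ring_nf
    simp only [Complex.I_sq]
    ring

/-! ### The function `W` and the decay of the Euler product -/

lemma W_one_eq (α y t : ℝ) : W α y 1 t = ∑ p ∈ (⌊y⌋₊ + 1).primesBelow,
    (1 - Real.cos (t * Real.log p)) / (p : ℝ) ^ α := by
  unfold W Nat.primesBelow
  congr 1
  ext p
  simp only [Finset.mem_filter]
  exact ⟨fun h ↦ ⟨h.1, h.2.1⟩, fun h ↦ ⟨h.1, h.2, by exact_mod_cast h.2.one_lt⟩⟩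

lemma W_one_nonneg (α y t : ℝ) : 0 ≤ W α y 1 t :=
  Finset.sum_nonneg fun _ _ ↦ div_nonneg (sub_nonneg.2 (Real.cos_le_one _))
    (Real.rpow_nonneg (Nat.cast_nonneg _) _)

lemma continuous_W_one (α y : ℝ) : Continuous (W α y 1) := by
  unfold W
  fun_prop

lemma W_one_abs (α y t : ℝ) : W α y 1 |t| = W α y 1 t := by
  rcases abs_choice t with h | h <;> rw [h]
  simp [W, Real.cos_neg]

/-- `|ζ(α + it, y)| ≤ ζ(α, y) e^{-W(y,1,t)}`. -/
lemma norm_eulerProduct_le {α : ℝ} (hα : 0 < α) (y t : ℝ) :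
    ‖∏ p ∈ (⌊y⌋₊ + 1).primesBelow, (1 - (p : ℂ) ^ (-((α : ℂ) + t * Complex.I)))⁻¹‖ ≤
      zetaR α y * Real.exp (-W α y 1 t) := by
  rw [W_one_eq, ← Finset.sum_neg_distrib, Real.exp_sum, zetaR, norm_prod]
  change _ ≤ (∏ p ∈ (⌊y⌋₊ + 1).primesBelow, _) * _
  rw [← Finset.prod_mul_distrib]
  exact Finset.prod_le_prod (fun _ _ ↦ norm_nonneg _)
    fun p hp ↦ norm_eulerFactor_le (Nat.prime_of_mem_primesBelow hp) hα t

lemma integrable_gaussian_W {z : ℝ} (hz : 0 < z) (α y : ℝ) :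
    Integrable fun t : ℝ ↦ Real.exp (-t ^ 2 / (2 * z ^ 2) - W α y 1 t) := by
  have hg := integrable_exp_neg_mul_sq (b := 1 / (2 * z ^ 2)) (by positivity)
  refine hg.mono' ?_ (Filter.Eventually.of_forall fun t ↦ ?_)
  · have := continuous_W_one α y
    exact (by fun_prop : Continuous _).aestronglyMeasurable
  · rw [Real.norm_of_nonneg (Real.exp_pos _).le, Real.exp_le_exp]
    have : -t ^ 2 / (2 * z ^ 2) = -(1 / (2 * z ^ 2)) * t ^ 2 := by ring
    linarith [W_one_nonneg α y t]

lemma integral_gaussian_W (z α y : ℝ) :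
    ∫ t : ℝ, Real.exp (-t ^ 2 / (2 * z ^ 2) - W α y 1 t) =
      2 * ∫ t in Set.Ioi (0 : ℝ), Real.exp (-t ^ 2 / (2 * z ^ 2) - W α y 1 t) := by
  rw [← integral_comp_abs]
  simp only [W_one_abs, sq_abs]

/-! ### The smoothed sum -/

/-- The sum of `e^{-z² log²(X/m)/2}` over `y`-smooth `m` converges, and is bounded by
integrating the absolute value of `e^{s²/(2z²)} X^s ζ(s, y)` along `Re s = α`. -/
lemma gaussian_sum_le {z X α : ℝ} (hz : 0 < z) (hX : 0 < X) (hα : 0 < α) (y : ℝ) :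
    Summable (fun m : (⌊y⌋₊ + 1).smoothNumbers ↦
      Real.exp (-(z * (Real.log X - Real.log (m : ℕ))) ^ 2 / 2)) ∧
    Real.sqrt (2 * Real.pi) * z * ∑' m : (⌊y⌋₊ + 1).smoothNumbers,
        Real.exp (-(z * (Real.log X - Real.log (m : ℕ))) ^ 2 / 2) ≤
      Real.exp (α ^ 2 / (2 * z ^ 2)) * X ^ α * zetaR α y *
        ∫ t : ℝ, Real.exp (-t ^ 2 / (2 * z ^ 2) - W α y 1 t) := by
  set N := ⌊y⌋₊ + 1 with hN
  let F : N.smoothNumbers → ℝ → ℂ := fun m t ↦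
    Complex.exp (((α : ℂ) + t * Complex.I) ^ 2 / (2 * z ^ 2) +
        ((α : ℂ) + t * Complex.I) * ((Real.log X - Real.log (m : ℕ) : ℝ) : ℂ))
  have hre : ∀ (t v : ℝ), (((α : ℂ) + t * Complex.I) ^ 2 / (2 * z ^ 2) +
        ((α : ℂ) + t * Complex.I) * (v : ℂ)).re =
      α ^ 2 / (2 * z ^ 2) + α * v + -t ^ 2 / (2 * z ^ 2) := by
    intro t v
    have : ((α : ℂ) + t * Complex.I) ^ 2 / (2 * z ^ 2) + ((α : ℂ) + t * Complex.I) * (v : ℂ) =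
        ((α ^ 2 / (2 * z ^ 2) + α * v + -t ^ 2 / (2 * z ^ 2) : ℝ) : ℂ) +
        ((α * t / z ^ 2 + t * v : ℝ) : ℂ) * Complex.I := by
      have hzc : (z : ℂ) ≠ 0 := by exact_mod_cast hz.ne'
      push_cast
      field_simp
      ring_nf
      simp only [Complex.I_sq]
      ring
    rw [this]
    simp only [Complex.add_re, Complex.ofReal_re, Complex.re_ofReal_mul, Complex.I_re, mul_zero,
      add_zero]
  have hFn : ∀ m t, ‖F m t‖ = Real.exp (α ^ 2 / (2 * z ^ 2)) * X ^ α * ((m : ℕ) : ℝ) ^ (-α) *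
      Real.exp (-(1 / (2 * z ^ 2)) * t ^ 2) := by
    intro m t
    have hm : (0 : ℝ) < (m : ℕ) := by
      exact_mod_cast Nat.pos_of_ne_zero (Nat.ne_zero_of_mem_smoothNumbers m.2)
    rw [Complex.norm_exp, hre, Real.rpow_def_of_pos hX, Real.rpow_def_of_pos hm,
      ← Real.exp_add, ← Real.exp_add, ← Real.exp_add]
    congr 1; ring
  have hgauss := integrable_exp_neg_mul_sq (b := 1 / (2 * z ^ 2)) (by positivity)
  have hFint : ∀ m, Integrable (F m) := by
    intro m
    refine (hgauss.const_mul (Real.exp (α ^ 2 / (2 * z ^ 2)) * X ^ α * ((m : ℕ) : ℝ) ^ (-α))).mono'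
      (by fun_prop : Continuous (F m)).aestronglyMeasurable
      (Filter.Eventually.of_forall fun t ↦ (hFn m t).le)
  have hFsum : Summable fun m ↦ ∫ t, ‖F m t‖ := by
    simp only [hFn, integral_const_mul]
    exact ((smooth_summable_hasSum hα 0 N).1.mul_left _).mul_right _
  have hsum := hasSum_integral_of_summable_integral_norm hFint hFsum
  have hFval : ∀ m, ∫ t, F m t = ((Real.sqrt (2 * Real.pi) * z *
      Real.exp (-(z * (Real.log X - Real.log (m : ℕ))) ^ 2 / 2) : ℝ) : ℂ) :=
    fun m ↦ integral_shifted_gaussian hz α _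
  simp only [hFval] at hsum
  have hc : Real.sqrt (2 * Real.pi) * z ≠ 0 := by positivity
  have hS : Summable (fun m : N.smoothNumbers ↦
      Real.exp (-(z * (Real.log X - Real.log (m : ℕ))) ^ 2 / 2)) :=
    (summable_mul_left_iff hc).1 (Complex.summable_ofReal.1 hsum.summable)
  refine ⟨hS, ?_⟩
  have heq : ((Real.sqrt (2 * Real.pi) * z * ∑' m : N.smoothNumbers,
      Real.exp (-(z * (Real.log X - Real.log (m : ℕ))) ^ 2 / 2) : ℝ) : ℂ) =
      ∫ t, ∑' m, F m t := by
    rw [← tsum_mul_left, Complex.ofReal_tsum]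
    exact hsum.tsum_eq
  have hF : ∀ t, ∑' m, F m t = Complex.exp (((α : ℂ) + t * Complex.I) ^ 2 / (2 * z ^ 2) +
      ((α : ℂ) + t * Complex.I) * (Real.log X : ℝ)) *
      ∏ p ∈ N.primesBelow, (1 - (p : ℂ) ^ (-((α : ℂ) + t * Complex.I)))⁻¹ := by
    intro t
    rw [← (smooth_summable_hasSum hα t N).2.tsum_eq, ← tsum_mul_left]
    refine tsum_congr fun m ↦ ?_
    rw [natCast_cpow_eq (Nat.ne_zero_of_mem_smoothNumbers m.2), ← Complex.exp_add]
    change Complex.exp _ = _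
    congr 1
    push_cast
    ring
  refine (le_abs_self _).trans ?_
  rw [← Real.norm_eq_abs, ← Complex.norm_real, heq, ← integral_const_mul]
  refine norm_integral_le_of_norm_le ((integrable_gaussian_W hz α y).const_mul _)
    (Filter.Eventually.of_forall fun t ↦ ?_)
  rw [hF, norm_mul, Complex.norm_exp, hre, Real.exp_add, Real.exp_add, sub_eq_add_neg, Real.exp_add,
    Real.rpow_def_of_pos hX, mul_comm α]
  refine (mul_le_mul_of_nonneg_left (norm_eulerProduct_le hα y t) (by positivity)).trans_eq ?_
  ring

/-! ### From the short-interval count to the smoothed sum -/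

lemma mem_Psi_filter {x y : ℝ} (hy : 0 ≤ y) {n : ℕ} :
    n ∈ (Finset.Icc 1 ⌊x⌋₊).filter (fun n : ℕ => ∀ p ∈ n.primeFactors, (p : ℝ) ≤ y) ↔
      (n : ℝ) ≤ x ∧ n ∈ (⌊y⌋₊ + 1).smoothNumbers := by
  have hs : n ∈ (⌊y⌋₊ + 1).smoothNumbers ↔ n ≠ 0 ∧ ∀ p ∈ n.primeFactors, (p : ℝ) ≤ y := by
    rw [Nat.mem_smoothNumbers]
    simp only [Nat.mem_primeFactors_iff_mem_primeFactorsList, Nat.lt_succ_iff, Nat.le_floor_iff hy]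
  rw [hs, Finset.mem_filter, Finset.mem_Icc]
  constructor
  · rintro ⟨⟨h1, h2⟩, h3⟩
    exact ⟨(Nat.le_floor_iff' (by omega)).1 h2, by omega, h3⟩
  · rintro ⟨h1, h2, h3⟩
    exact ⟨⟨by omega, (Nat.le_floor_iff' h2).2 h1⟩, h3⟩

/-- Each `m ∈ (X, X (1 + 1/z)]` has `0 < z log (m/X) ≤ 1`, hence Gaussian weight at
least `e^{-1/2}`; the short-interval count is thus at most `√e` times the Gaussian sum. -/
lemma Psi_sub_le {X z y : ℝ} (hz : 0 < z) (hX : 0 < X) (hy : 0 ≤ y)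
    (hS : Summable (fun m : (⌊y⌋₊ + 1).smoothNumbers ↦
      Real.exp (-(z * (Real.log X - Real.log (m : ℕ))) ^ 2 / 2))) :
    (Psi (X * (1 + 1 / z)) y : ℝ) - Psi X y ≤
      Real.sqrt (Real.exp 1) * ∑' m : (⌊y⌋₊ + 1).smoothNumbers,
        Real.exp (-(z * (Real.log X - Real.log (m : ℕ))) ^ 2 / 2) := by
  classical
  set N := ⌊y⌋₊ + 1 with hN
  set A := (Finset.Icc 1 ⌊X * (1 + 1 / z)⌋₊).filter
    (fun n : ℕ => ∀ p ∈ n.primeFactors, (p : ℝ) ≤ y) with hA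
  set B := (Finset.Icc 1 ⌊X⌋₊).filter (fun n : ℕ => ∀ p ∈ n.primeFactors, (p : ℝ) ≤ y) with hB
  have hmem : ∀ n ∈ A \ B, n ∈ N.smoothNumbers ∧ X < n ∧ (n : ℝ) ≤ X * (1 + 1 / z) := by
    intro n hn
    rw [Finset.mem_sdiff, hA, hB, mem_Psi_filter hy, mem_Psi_filter hy] at hn
    exact ⟨hn.1.2, lt_of_not_ge fun h ↦ hn.2 ⟨h, hn.1.2⟩, hn.1.1⟩
  have hcard : (Psi (X * (1 + 1 / z)) y : ℝ) - Psi X y ≤ ((A \ B).card : ℝ) := by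
    have : A.card ≤ (A \ B).card + B.card := by
      have := Finset.le_card_sdiff B A
      omega
    have h' : (A.card : ℝ) ≤ (A \ B).card + B.card := by exact_mod_cast this
    change (A.card : ℝ) - B.card ≤ _
    linarith
  refine hcard.trans ?_
  have hpt : ∀ n ∈ A \ B, (1 : ℝ) ≤ Real.sqrt (Real.exp 1) *
      Real.exp (-(z * (Real.log X - Real.log n)) ^ 2 / 2) := by
    intro n hn
    obtain ⟨-, h1, h2⟩ := hmem n hn
    have hl1 := Real.log_lt_log hX h1
    have hl2 := Real.log_le_log (hX.trans h1) h2
    rw [Real.log_mul hX.ne' (by positivity)] at hl2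
    have hl3 := Real.log_le_sub_one_of_pos (show 0 < 1 + 1 / z by positivity)
    have hv : z * (Real.log n - Real.log X) ≤ 1 := by
      calc z * (Real.log n - Real.log X) ≤ z * (1 / z) :=
            mul_le_mul_of_nonneg_left (by linarith) hz.le
        _ = 1 := by field_simp
    have hv0 : 0 ≤ z * (Real.log n - Real.log X) := mul_nonneg hz.le (by linarith)
    rw [← Real.exp_half, ← Real.exp_add, Real.one_le_exp_iff]
    nlinarith
  calc ((A \ B).card : ℝ) = ∑ n ∈ A \ B, (1 : ℝ) := by simp
    _ ≤ ∑ n ∈ A \ B, Real.sqrt (Real.exp 1) *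
        Real.exp (-(z * (Real.log X - Real.log n)) ^ 2 / 2) := Finset.sum_le_sum hpt
    _ = Real.sqrt (Real.exp 1) * ∑ n ∈ A \ B,
        Real.exp (-(z * (Real.log X - Real.log n)) ^ 2 / 2) := by rw [Finset.mul_sum]
    _ ≤ _ := by
      refine mul_le_mul_of_nonneg_left ?_ (Real.sqrt_nonneg _)
      rw [← Finset.sum_subtype_of_mem (p := (· ∈ N.smoothNumbers))
        (fun n : ℕ ↦ Real.exp (-(z * (Real.log X - Real.log n)) ^ 2 / 2)) fun n hn ↦ (hmem n hn).1]
      exact hS.sum_le_tsum _ fun _ _ ↦ (Real.exp_pos _).le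

theorem stmt_14 (x y α d T z : ℝ) (hy : 2 ≤ y) (hxy : y ≤ x)
    (hα0 : 0 < α) (hα1 : α ≤ 1) (hd0 : 0 < d) (hd1 : d < 1) (hT : 1 < T)
    (hzdef : z = (Real.exp (2 * T ^ (d - 1)) - 1)⁻¹) (hz : 1 < z) :
    (Psi (x * Real.exp (T ^ (d - 1))) y : ℝ) - (Psi (x * Real.exp (-T ^ (d - 1))) y : ℝ)
      ≤ Real.exp (α ^ 2 / (2 * z ^ 2) - α * T ^ (d - 1)) * x ^ α * zetaR α y *
        Real.sqrt (2 * Real.exp 1 / Real.pi) *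
        (∫ t in Set.Ioi (0 : ℝ),
          Real.exp (-t ^ 2 / (2 * z ^ 2) - W α y 1 t)) / z := by
  set δ := T ^ (d - 1) with hδ
  have hz0 : 0 < z := by linarith
  have hx0 : 0 < x := by linarith
  set X := x * Real.exp (-δ) with hXdef
  have hX : 0 < X := by positivity
  have hXz : X * (1 + 1 / z) = x * Real.exp δ := by
    rw [hzdef, one_div, inv_inv, hXdef, add_sub_cancel, mul_assoc, ← Real.exp_add]
    congr 2; ring
  have hXα : X ^ α = x ^ α * Real.exp (-(α * δ)) := by
    rw [hXdef, Real.mul_rpow hx0.le (Real.exp_pos _).le, ← Real.exp_mul]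
    congr 2; ring
  obtain ⟨hS, hmain⟩ := gaussian_sum_le hz0 hX hα0 y
  have hcount := Psi_sub_le hz0 hX (by linarith) hS
  rw [hXz] at hcount
  rw [integral_gaussian_W, hXα] at hmain
  set J := ∫ t in Set.Ioi (0 : ℝ), Real.exp (-t ^ 2 / (2 * z ^ 2) - W α y 1 t) with hJ
  have hc : 0 < Real.sqrt (2 * Real.pi) := by positivity
  have hsqrt : Real.sqrt (2 * Real.exp 1 / Real.pi) =
      Real.sqrt (Real.exp 1) * 2 / Real.sqrt (2 * Real.pi) := by
    rw [eq_div_iff hc.ne', ← Real.sqrt_mul (by positivity)]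
    rw [show 2 * Real.exp 1 / Real.pi * (2 * Real.pi) = Real.exp 1 * 2 ^ 2 by
      field_simp]
    rw [Real.sqrt_mul (Real.exp_pos _).le, Real.sqrt_sq (by norm_num)]
  rw [← le_div_iff₀' (by positivity)] at hmain
  refine hcount.trans ((mul_le_mul_of_nonneg_left hmain (Real.sqrt_nonneg _)).trans_eq ?_)
  rw [hsqrt, sub_eq_add_neg, Real.exp_add]
  field_simp
end

section
/- Let x ≥ y ≥ 2, let 0 < α ≤ 1, let 0 < d < 1 and T > 1 be such that z := (e^{2·T^{d−1}} − 1)^{−1} > 1, and let 0 < T₀ ≤ T. Set J₁ = ∫_{T₀}^{T} exp( −W(y,1,t) ) · dt/√(α² + t²) and J₂ = ∫_{0}^{∞} exp( −t²/(2z²) − W(y,1,t) ) dt. Suppose J₀⁻ and J₀⁺ are real numbers such that (x^α·ζ(α,y)/π)·J₀⁻ ≤ (1/2πi)·∫_{α−iT₀}^{α+iT₀} ζ(s,y)·x^s/s ds ≤ (x^α·ζ(α,y)/π)·J₀⁺ (this contour integral being real). Then Ψ(x,y) ≥ (x^α·ζ(α,y)/π) · ( J₀⁻ − J₁ − T^{−d}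 − e^{α²/(2z²)}·√(2πe)·J₂/z ) and Ψ(x,y) ≤ (x^α·ζ(α,y)/π) · ( J₀⁺ + J₁ + T^{−d} + e^{α²/(2z²)}·√(2πe)·J₂/z ). -/
/-!
The bound is a truncated Perron formula with all constants tracked. For every `y`-smooth `n` put
`v = log (x / n)`; by the Euler product, `ζ(s,y) x^s` is the sum of `e^{vs}` over smooth `n`, and
integrating termwise along `Re s = α`, `|t| ≤ T` gives the sum of the kernels
`∫ e^{v(α+it)} / (α+it) dt` (`hasSum_perronK`). Each kernel differs from `2π·[n ≤ x]` by at most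
`e^{αv} min(2/(T|v|), 1 + 2π)` (`perron_bound`, `perron_bound_near`): Cauchy's theorem moves the
vertical segment off to `∓∞`, and only the two horizontal sides survive.

If `|v| ≥ T^{d-1}` the first bound is at most `2 T^{-d} e^{αv}`, and summing over `n` yields the
term `T^{-d}`. If `|v| < T^{d-1}`, the definition of `z` gives `z|v| ≤ 1/2`, so the constant
`1 + 2π` is at most `2π √e · exp(-z²v²/2)` (`near_window`). Hence the sum of both bounds is valid
for all `n`, and the Gaussian-weighted sum over smooth `n` is evaluated by Fourier inversion of the
Gaussian as an integral of `ζ(α+it,y) x^{α+it} e^{-t²/(2z²)}` (`gauss_sum_le`).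

Both this integral and the part `T₀ ≤ |t| ≤ T` of the contour are then estimated with
`|ζ(α+it,y)| ≤ ζ(α,y) exp(-W(y,1,t))` (`norm_zetaC_le`), which holds factor by factor in the
Euler product; they give the terms `J₂` and `J₁`.
-/

open MeasureTheory

/-- `ζ(s,y) = ∏_{p ≤ y, p prime} (1 - p^{-s})⁻¹` for complex `s`. -/
noncomputable def zetaC (s : ℂ) (y : ℝ) : ℂ :=
  ∏ p ∈ (Finset.range (⌊y⌋₊ + 1)).filter Nat.Prime, (1 - (p : ℂ) ^ (-s))⁻¹

/-- The contour integral `(1/2πi) ∫_{α-iT₀}^{α+iT₀} ζ(s,y) x^s / s ds`,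
parametrized along the vertical segment `s = α + it`, `-T₀ ≤ t ≤ T₀`. -/
noncomputable def contourInt (x y α T₀ : ℝ) : ℂ :=
  (1 / (2 * (Real.pi : ℂ) * Complex.I)) *
    (Complex.I * ∫ t in (-T₀)..T₀,
      zetaC ((α : ℂ) + (t : ℂ) * Complex.I) y *
        (x : ℂ) ^ ((α : ℂ) + (t : ℂ) * Complex.I) /
        ((α : ℂ) + (t : ℂ) * Complex.I))

/-- `J₁ = ∫_{T₀}^{T} exp(−W(y,1,t)) dt/√(α²+t²)`. -/
noncomputable def J₁ (y α T₀ T : ℝ) : ℝ :=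
  ∫ t in T₀..T, Real.exp (-W α y 1 t) / Real.sqrt (α ^ 2 + t ^ 2)

/-- `J₂ = ∫_0^∞ exp(−t²/(2z²) − W(y,1,t)) dt`. -/
noncomputable def J₂ (y α z : ℝ) : ℝ :=
  ∫ t in Set.Ioi (0 : ℝ), Real.exp (-t ^ 2 / (2 * z ^ 2) - W α y 1 t)

open Real

/-! ### The Perron kernel -/

lemma arc_vert (a T : ℝ) (ha : a ≠ 0) :
    ∫ t in (-T)..T, (1 : ℂ) / ((a : ℂ) + (t : ℂ) * Complex.I) = 2 * (arctan (T / a) : ℝ) := by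
  have hd : ∀ t : ℝ, HasDerivAt (fun t : ℝ => ((arctan (t / a) : ℝ) : ℂ)
      - Complex.I / 2 * ((log (a ^ 2 + t ^ 2) : ℝ) : ℂ))
      ((1 : ℂ) / ((a : ℂ) + (t : ℂ) * Complex.I)) t := by
    intro t
    have hp : 0 < a ^ 2 + t ^ 2 := by positivity
    have h1 : HasDerivAt (fun t : ℝ => arctan (t / a)) (1 / (1 + (t / a) ^ 2) * (1 / a)) t :=
      ((hasDerivAt_id t).div_const a).arctan
    have h2 : HasDerivAt (fun t : ℝ => log (a ^ 2 + t ^ 2)) ((2 * t) / (a ^ 2 + t ^ 2)) t := by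
      have := (((hasDerivAt_id t).pow 2).const_add (a ^ 2)).log hp.ne'
      simpa using this
    have h3 := h1.ofReal_comp.sub (h2.ofReal_comp.const_mul (Complex.I / 2))
    refine h3.congr_deriv (Eq.symm ?_)
    have hc : (a : ℂ) + (t : ℂ) * Complex.I ≠ 0 := by
      intro h
      have := congrArg Complex.re h
      simp at this
      exact ha this
    have ha' : (a : ℂ) ≠ 0 := by exact_mod_cast ha
    have hp' : (a : ℂ) ^ 2 + (t : ℂ) ^ 2 ≠ 0 := by exact_mod_cast hp.ne'
    have e1 : 1 / (1 + (t / a) ^ 2) * (1 / a) = a / (a ^ 2 + t ^ 2) := by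
      field_simp
    rw [e1]
    push_cast
    rw [div_eq_iff hc]
    field_simp
    ring_nf
    simp [Complex.I_sq]
  rw [intervalIntegral.integral_eq_sub_of_hasDerivAt (fun t _ => hd t)]
  · simp [neg_div]
    ring
  · apply Continuous.intervalIntegrable
    refine Continuous.div continuous_const (by fun_prop) ?_
    intro t h
    have := congrArg Complex.re h
    simp at this
    exact ha this

lemma arc_horiz (a b T : ℝ) (hT : T ≠ 0) :
    ∫ s in a..b, ((1 : ℂ) / ((s : ℂ) + (-T : ℝ) * Complex.I)
      - 1 / ((s : ℂ) + (T : ℂ) * Complex.I)) =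
    2 * Complex.I * ((arctan (b / T) : ℝ) - (arctan (a / T) : ℝ)) := by
  have hd : ∀ s : ℝ, HasDerivAt (fun s : ℝ => 2 * Complex.I * ((arctan (s / T) : ℝ) : ℂ))
      ((1 : ℂ) / ((s : ℂ) + (-T : ℝ) * Complex.I) - 1 / ((s : ℂ) + (T : ℂ) * Complex.I)) s := by
    intro t
    have hp : 0 < t ^ 2 + T ^ 2 := by positivity
    have h1 : HasDerivAt (fun t : ℝ => arctan (t / T)) (1 / (1 + (t / T) ^ 2) * (1 / T)) t :=
      ((hasDerivAt_id t).div_const T).arctan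
    have h3 := (h1.ofReal_comp.const_mul (2 * Complex.I))
    refine h3.congr_deriv (Eq.symm ?_)
    have hc : (t : ℂ) + (T : ℂ) * Complex.I ≠ 0 := by
      intro h
      have := congrArg Complex.im h
      simp at this
      exact hT this
    have hc2 : (t : ℂ) + (-T : ℝ) * Complex.I ≠ 0 := by
      intro h
      have := congrArg Complex.im h
      simp at this
      exact hT this
    have e1 : 1 / (1 + (t / T) ^ 2) * (1 / T) = T / (t ^ 2 + T ^ 2) := by
      field_simp
      ring
    have hp' : (t : ℂ) ^ 2 + (T : ℂ) ^ 2 ≠ 0 := by exact_mod_cast hp.ne'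
    rw [e1]
    push_cast at hc2 ⊢
    rw [div_sub_div _ _ hc2 hc, mul_div_assoc', div_eq_div_iff (mul_ne_zero hc2 hc) hp']
    ring_nf
    simp
  rw [intervalIntegral.integral_eq_sub_of_hasDerivAt (fun t _ => hd t)]
  · ring
  · apply Continuous.intervalIntegrable
    refine Continuous.sub (Continuous.div continuous_const (by fun_prop) ?_)
      (Continuous.div continuous_const (by fun_prop) ?_) <;>
    · intro t h
      have := congrArg Complex.im h
      simp at this
      exact hT this

/-- `2π` times the Perron kernel truncated at height `T`: the integral
`∫_{-T}^{T} e^{v(a+it)} / (a+it) dt` over the segment `s = a + it`, with respect to `dt`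
(so without the factor `i` of `ds`). The abscissa `a` may be negative. -/
noncomputable def perronK (a T v : ℝ) : ℂ :=
  ∫ t in (-T)..T, Complex.exp (v * ((a : ℂ) + (t : ℂ) * Complex.I)) /
    ((a : ℂ) + (t : ℂ) * Complex.I)

lemma vert_ne {a : ℝ} (ha : a ≠ 0) (t : ℝ) : (a : ℂ) + (t : ℂ) * Complex.I ≠ 0 := by
  intro h
  have := congrArg Complex.re h
  simp at this
  exact ha this

lemma horiz_ne {t : ℝ} (ht : t ≠ 0) (a : ℝ) : (a : ℂ) + (t : ℂ) * Complex.I ≠ 0 := by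
  intro h
  have := congrArg Complex.im h
  simp at this
  exact ht this

/-- Cauchy's theorem for `e^{vs}/s` on the rectangle with vertical sides at abscissas `c` and `a`;
the residue at `0` contributes precisely when `c < 0`. -/
lemma perron_rect (a c T v : ℝ) (ha : 0 < a) (hc : c ≠ 0) (hT : 0 < T) :
    Complex.I * perronK a T v - (if c < 0 then 2 * π * Complex.I else 0) =
    (∫ s in c..a, (Complex.exp (v * ((s : ℂ) + (T : ℂ) * Complex.I)) /
        ((s : ℂ) + (T : ℂ) * Complex.I) -
      Complex.exp (v * ((s : ℂ) + (-T : ℝ) * Complex.I)) /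
        ((s : ℂ) + (-T : ℝ) * Complex.I))) + Complex.I * perronK c T v := by
  -- Split `e^{vs}/s` into the entire function `(e^{vs}-1)/s` and `1/s`; the contour integral
  -- of `1/s` is computed by arctangents, so no residue theorem is needed.
  set f : ℂ → ℂ := fun s => Complex.exp (v * s) with hf
  have hfd : Differentiable ℂ f := by
    rw [hf]; fun_prop
  have hg : Differentiable ℂ (dslope f 0) := by
    rw [← differentiableOn_univ]
    exact (Complex.differentiableOn_dslope Filter.univ_mem).2 hfd.differentiableOn
  have hgv : ∀ s : ℂ, s ≠ 0 → f s / s = dslope f 0 s + 1 / s := by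
    intro s hs
    rw [dslope_of_ne _ hs, slope_def_field]
    simp [hf]
    field_simp
    ring
  have hgc := hg.continuous
  have key := Complex.integral_boundary_rect_eq_zero_of_differentiableOn (dslope f 0)
    ((c : ℂ) + (-T : ℝ) * Complex.I) ((a : ℂ) + (T : ℝ) * Complex.I) hg.differentiableOn
  simp only [Complex.add_re, Complex.ofReal_re, Complex.mul_re, Complex.I_re, mul_zero,
    Complex.ofReal_im, Complex.I_im, mul_one, sub_self, add_zero, Complex.add_im,
    Complex.mul_im, zero_add, smul_eq_mul] at key
  have hTn : -T ≠ 0 := neg_ne_zero.2 hT.ne'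
  have kv : ∀ b : ℝ, b ≠ 0 → perronK b T v =
      (∫ t in (-T)..T, dslope f 0 ((b : ℂ) + (t : ℂ) * Complex.I)) + 2 * (arctan (T / b) : ℝ) := by
    intro b hb
    rw [← arc_vert b T hb, ← intervalIntegral.integral_add]
    · exact intervalIntegral.integral_congr (fun t _ => hgv _ (vert_ne hb t))
    · exact (hgc.comp (by fun_prop)).intervalIntegrable _ _
    · exact (Continuous.div continuous_const (by fun_prop) (vert_ne hb)).intervalIntegrable _ _
  have kh : (∫ s in c..a, (Complex.exp (v * ((s : ℂ) + (T : ℂ) * Complex.I)) /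
        ((s : ℂ) + (T : ℂ) * Complex.I) -
      Complex.exp (v * ((s : ℂ) + (-T : ℝ) * Complex.I)) /
        ((s : ℂ) + (-T : ℝ) * Complex.I))) =
      (∫ s in c..a, dslope f 0 ((s : ℂ) + (T : ℂ) * Complex.I)) -
      (∫ s in c..a, dslope f 0 ((s : ℂ) + (-T : ℝ) * Complex.I)) -
       2 * Complex.I * ((arctan (a / T) : ℝ) - (arctan (c / T) : ℝ)) := by
    rw [← arc_horiz c a T hT.ne', ← intervalIntegral.integral_sub, ← intervalIntegral.integral_sub]
    · refine intervalIntegral.integral_congr (fun t _ => ?_)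
      have h1 := hgv _ (horiz_ne hT.ne' t)
      have h2 := hgv _ (horiz_ne hTn t)
      simp only [hf] at h1 h2 ⊢
      rw [h1, h2]
      ring
    · exact ((hgc.comp (by fun_prop)).sub (hgc.comp (by fun_prop))).intervalIntegrable _ _
    · exact ((Continuous.div continuous_const (by fun_prop) (horiz_ne hTn)).sub
        (Continuous.div continuous_const (by fun_prop) (horiz_ne hT.ne'))).intervalIntegrable _ _
    · exact (hgc.comp (by fun_prop)).intervalIntegrable _ _
    · exact (hgc.comp (by fun_prop)).intervalIntegrable _ _
  have e1 : arctan (T / a) = π / 2 - arctan (a / T) := by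
    rw [← arctan_inv_of_pos (by positivity), inv_div]
  rw [kv a ha.ne', kv c hc, kh, e1]
  split_ifs with h
  · have e2 : arctan (T / c) = -(π / 2) - arctan (c / T) := by
      rw [← arctan_inv_of_neg (div_neg_of_neg_of_pos h hT), inv_div]
    rw [e2]
    push_cast at key ⊢
    linear_combination key
  · have hc' : 0 < c := lt_of_le_of_ne (not_lt.1 h) hc.symm
    have e2 : arctan (T / c) = (π / 2) - arctan (c / T) := by
      rw [← arctan_inv_of_pos (by positivity), inv_div]
    rw [e2]
    push_cast at key ⊢
    linear_combination key

lemma norm_exp_div_horiz_le (v s t T : ℝ) (hT : 0 < T) (ht : |t| = T) :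
    ‖Complex.exp (v * ((s : ℂ) + (t : ℂ) * Complex.I)) / ((s : ℂ) + (t : ℂ) * Complex.I)‖ ≤
      exp (v * s) / T := by
  rw [norm_div, Complex.norm_exp]
  have h1 : ((v : ℂ) * ((s : ℂ) + (t : ℂ) * Complex.I)).re = v * s := by simp
  have h2 : T ≤ ‖(s : ℂ) + (t : ℂ) * Complex.I‖ := by
    have := Complex.abs_im_le_norm ((s : ℂ) + (t : ℂ) * Complex.I)
    simpa [ht] using this
  rw [h1]
  gcongr

lemma horiz_diff_bound1 (v s T : ℝ) (hT : 0 < T) :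
    ‖Complex.exp (v * ((s : ℂ) + (T : ℂ) * Complex.I)) / ((s : ℂ) + (T : ℂ) * Complex.I) -
      Complex.exp (v * ((s : ℂ) + (-T : ℝ) * Complex.I)) / ((s : ℂ) + (-T : ℝ) * Complex.I)‖ ≤
      2 / T * exp (v * s) := by
  refine (norm_sub_le _ _).trans ?_
  have h1 := norm_exp_div_horiz_le v s T T hT (abs_of_pos hT)
  have h2 := norm_exp_div_horiz_le v s (-T) T hT (by rw [abs_neg, abs_of_pos hT])
  calc _ ≤ exp (v * s) / T + exp (v * s) / T := add_le_add h1 h2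
    _ = _ := by ring

/-- A bound that stays integrable uniformly as `v → 0`. The difference of the two conjugate values
is `2i e^{vs} (s sin(vT) - T cos(vT)) / (s² + T²)`; use `|sin(vT)| ≤ |v| T` and `2|s|T ≤ s² + T²`. -/
lemma horiz_diff_bound2 (v s T : ℝ) (hT : 0 < T) :
    ‖Complex.exp (v * ((s : ℂ) + (T : ℂ) * Complex.I)) / ((s : ℂ) + (T : ℂ) * Complex.I) -
      Complex.exp (v * ((s : ℂ) + (-T : ℝ) * Complex.I)) / ((s : ℂ) + (-T : ℝ) * Complex.I)‖ ≤
      |v| * exp (v * s) + exp (v * s) * (2 * (T / (s ^ 2 + T ^ 2))) := by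
  have hp : 0 < s ^ 2 + T ^ 2 := by positivity
  have e : Complex.exp (v * ((s : ℂ) + (T : ℂ) * Complex.I)) / ((s : ℂ) + (T : ℂ) * Complex.I) -
      Complex.exp (v * ((s : ℂ) + (-T : ℝ) * Complex.I)) / ((s : ℂ) + (-T : ℝ) * Complex.I) =
      ((exp (v * s) * (2 * (s * sin (v * T) - T * cos (v * T)) / (s ^ 2 + T ^ 2)) : ℝ) : ℂ)
        * Complex.I := by
    have e1 : Complex.exp (v * ((s : ℂ) + (T : ℂ) * Complex.I)) =
        Complex.exp (v * s) * (Complex.cos (v * T) + Complex.sin (v * T) * Complex.I) := by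
      rw [← Complex.exp_mul_I, ← Complex.exp_add]
      congr 1; ring
    have e2 : Complex.exp (v * ((s : ℂ) + (-T : ℝ) * Complex.I)) =
        Complex.exp (v * s) * (Complex.cos (v * T) - Complex.sin (v * T) * Complex.I) := by
      have : Complex.exp (v * s) * (Complex.cos (v * T) - Complex.sin (v * T) * Complex.I) =
        Complex.exp (v * s) *
          (Complex.cos (-(v * T)) + Complex.sin (-(v * T)) * Complex.I) := by
        rw [Complex.cos_neg, Complex.sin_neg]; ring
      rw [this, ← Complex.exp_mul_I, ← Complex.exp_add]
      congr 1; push_cast; ring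
    have hc1 := horiz_ne hT.ne' s
    have hc2 := horiz_ne (neg_ne_zero.2 hT.ne') s
    have hp' : (s : ℂ) ^ 2 + (T : ℂ) ^ 2 ≠ 0 := by exact_mod_cast hp.ne'
    rw [e1, e2]
    push_cast at hc2 ⊢
    rw [div_sub_div _ _ hc1 hc2]
    have hq : ((s : ℂ) + T * Complex.I) * (s + -T * Complex.I) = s ^ 2 + T ^ 2 := by
      linear_combination (-(T : ℂ) ^ 2) * Complex.I_sq
    rw [hq]
    field_simp
    ring
  rw [e, norm_mul, Complex.norm_I, mul_one, Complex.norm_real, norm_eq_abs, abs_mul,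
    abs_of_pos (exp_pos _), abs_div, abs_of_pos hp, mul_comm |v|, ← mul_add]
  refine mul_le_mul_of_nonneg_left ?_ (exp_pos _).le
  rw [div_le_iff₀ hp, abs_mul, abs_two]
  have h1 : |s * sin (v * T) - T * cos (v * T)| ≤ |s| * (|v| * T) + T := by
    refine (abs_sub _ _).trans ?_
    rw [abs_mul, abs_mul, abs_of_pos hT]
    have h3 : |sin (v * T)| ≤ |v| * T := by
      have := abs_sin_le_abs (x := v * T)
      rwa [abs_mul, abs_of_pos hT] at this
    have h4 := abs_cos_le_one (v * T)
    gcongr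
    nlinarith
  have h2 : 2 * |s| * T ≤ s ^ 2 + T ^ 2 := by
    nlinarith [sq_nonneg (|s| - T), sq_abs s]
  have h5 : (|v| + 2 * (T / (s ^ 2 + T ^ 2))) * (s ^ 2 + T ^ 2) = |v| * (s ^ 2 + T ^ 2) + 2 * T := by
    field_simp
  rw [h5]
  nlinarith [abs_nonneg v, mul_le_mul_of_nonneg_left h2 (abs_nonneg v)]

lemma abs_integral_exp_le (a c v : ℝ) (hv : v ≠ 0) (hca : v * c ≤ v * a) :
    |∫ s in c..a, exp (v * s)| ≤ exp (v * a) / |v| := by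
  have : ∫ s in c..a, exp (v * s) = (exp (v * a) - exp (v * c)) / v := by
    rw [intervalIntegral.integral_comp_mul_left (fun s => exp s) hv, integral_exp, smul_eq_mul]
    field_simp
  rw [this, abs_div]
  gcongr
  rw [abs_of_nonneg (sub_nonneg.2 (exp_le_exp.2 hca))]
  linarith [exp_pos (v * c)]

lemma abs_integral_cauchy_le (a c T : ℝ) (hT : 0 < T) :
    |∫ s in c..a, 2 * (T / (s ^ 2 + T ^ 2))| ≤ 2 * π := by
  have : ∫ s in c..a, 2 * (T / (s ^ 2 + T ^ 2)) = 2 * (arctan (a / T) - arctan (c / T)) := by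
    have hd : ∀ s : ℝ, HasDerivAt (fun s : ℝ => 2 * arctan (s / T))
        (2 * (T / (s ^ 2 + T ^ 2))) s := by
      intro t
      have hp : 0 < t ^ 2 + T ^ 2 := by positivity
      have h1 : HasDerivAt (fun t : ℝ => arctan (t / T)) (1 / (1 + (t / T) ^ 2) * (1 / T)) t :=
        ((hasDerivAt_id t).div_const T).arctan
      refine (h1.const_mul 2).congr_deriv ?_
      field_simp
      ring
    rw [intervalIntegral.integral_eq_sub_of_hasDerivAt (fun t _ => hd t)]
    · ring
    · refine Continuous.intervalIntegrable ?_ _ _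
      refine continuous_const.mul (Continuous.div continuous_const (by fun_prop) ?_)
      intro t
      positivity
  rw [this, abs_le]
  have h1 := arctan_lt_pi_div_two (a / T)
  have h2 := arctan_lt_pi_div_two (c / T)
  have h3 := neg_pi_div_two_lt_arctan (a / T)
  have h4 := neg_pi_div_two_lt_arctan (c / T)
  constructor <;> linarith

/-- The hypothesis `v * c ≤ v * a` covers both directions of shifting: to the left of `a` for
`v > 0`, to the right for `v < 0`. -/
lemma horiz_int_bound (a c T v : ℝ) (hT : 0 < T) (hv : v ≠ 0) (hca : v * c ≤ v * a) :
    ‖∫ s in c..a, (Complex.exp (v * ((s : ℂ) + (T : ℂ) * Complex.I)) /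
        ((s : ℂ) + (T : ℂ) * Complex.I) -
      Complex.exp (v * ((s : ℂ) + (-T : ℝ) * Complex.I)) /
        ((s : ℂ) + (-T : ℝ) * Complex.I))‖ ≤
      exp (v * a) * min (2 / (T * |v|)) (1 + 2 * π) := by
  have hv' : 0 < |v| := abs_pos.2 hv
  rw [mul_min_of_nonneg _ _ (exp_pos _).le]
  have hmem : ∀ s ∈ Set.uIoc c a, v * s ≤ v * a := by
    intro s hs
    rcases lt_or_gt_of_ne hv with h | h
    · have hac : a ≤ c := by nlinarith
      rw [Set.uIoc_of_ge hac] at hs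
      nlinarith [hs.1]
    · have hac : c ≤ a := by nlinarith
      rw [Set.uIoc_of_le hac] at hs
      nlinarith [hs.2]
  have hcc : Continuous (fun s : ℝ => 2 * (T / (s ^ 2 + T ^ 2))) := by
    refine continuous_const.mul (Continuous.div continuous_const (by fun_prop) ?_)
    intro t
    positivity
  refine le_min ?_ ?_
  · refine (intervalIntegral.norm_integral_le_abs_of_norm_le
      (g := fun s => 2 / T * exp (v * s)) ?_ ?_).trans ?_
    · exact Filter.Eventually.of_forall (fun s => horiz_diff_bound1 v s T hT)
    · exact Continuous.intervalIntegrable (by fun_prop) _ _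
    · rw [intervalIntegral.integral_const_mul, abs_mul, abs_of_pos (by positivity)]
      calc 2 / T * |∫ s in c..a, exp (v * s)| ≤ 2 / T * (exp (v * a) / |v|) := by
            gcongr
            exact abs_integral_exp_le a c v hv hca
        _ = _ := by field_simp
  · refine (intervalIntegral.norm_integral_le_abs_of_norm_le
      (g := fun s => |v| * exp (v * s) + exp (v * a) * (2 * (T / (s ^ 2 + T ^ 2)))) ?_ ?_).trans ?_
    · rw [ae_restrict_iff' measurableSet_uIoc]
      refine Filter.Eventually.of_forall (fun s hs => (horiz_diff_bound2 v s T hT).trans ?_)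
      have := exp_le_exp.2 (hmem s hs)
      gcongr
    · exact Continuous.intervalIntegrable (by fun_prop) _ _
    · rw [intervalIntegral.integral_add, intervalIntegral.integral_const_mul,
        intervalIntegral.integral_const_mul]
      · refine (abs_add_le _ _).trans ?_
        rw [abs_mul, abs_mul, abs_abs, abs_of_pos (exp_pos _)]
        have h1 := abs_integral_exp_le a c v hv hca
        have h2 := abs_integral_cauchy_le a c T hT
        calc _ ≤ |v| * (exp (v * a) / |v|) + exp (v * a) * (2 * π) := by gcongr
          _ = _ := by field_simp
      · exact Continuous.intervalIntegrable (by fun_prop) _ _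
      · exact Continuous.intervalIntegrable (by fun_prop) _ _

lemma norm_perronK_le (c T v : ℝ) (hT : 0 < T) (hc : c ≠ 0) (hvc : v * c ≤ 0) :
    ‖perronK c T v‖ ≤ 2 * T / |c| := by
  have h := intervalIntegral.norm_integral_le_of_norm_le_const (a := -T) (b := T) (C := 1 / |c|)
    (f := fun t : ℝ => Complex.exp (v * ((c : ℂ) + (t : ℂ) * Complex.I)) /
    ((c : ℂ) + (t : ℂ) * Complex.I)) ?_
  · refine h.trans (le_of_eq ?_)
    rw [sub_neg_eq_add, abs_of_pos (show 0 < T + T by linarith)]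
    ring
  · intro t _
    rw [norm_div, Complex.norm_exp]
    have h1 : ((v : ℂ) * ((c : ℂ) + (t : ℂ) * Complex.I)).re = v * c := by simp
    have h2 : |c| ≤ ‖(c : ℂ) + (t : ℂ) * Complex.I‖ := by
      have := Complex.abs_re_le_norm ((c : ℂ) + (t : ℂ) * Complex.I)
      simpa using this
    rw [h1]
    have := abs_pos.2 hc
    gcongr
    exact exp_le_one_iff.2 hvc

/-- Truncated Perron formula away from `v = 0`, obtained by shifting the segment to abscissa
`-v r` and letting `r → ∞`. -/
lemma perron_bound (a T v : ℝ) (ha : 0 < a) (hT : 0 < T) (hv : v ≠ 0) :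
    ‖perronK a T v - (if 0 ≤ v then 2 * π else 0)‖ ≤
      exp (v * a) * min (2 / (T * |v|)) (1 + 2 * π) := by
  have hv' : 0 < |v| := abs_pos.2 hv
  have hv2 : 0 < v ^ 2 := by positivity
  have hlim : Filter.Tendsto (fun r : ℝ => exp (v * a) * min (2 / (T * |v|)) (1 + 2 * π) +
      (2 * T / |v|) * r⁻¹) Filter.atTop
      (nhds (exp (v * a) * min (2 / (T * |v|)) (1 + 2 * π) + (2 * T / |v|) * 0)) :=
    tendsto_const_nhds.add (tendsto_const_nhds.mul tendsto_inv_atTop_zero)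
  rw [mul_zero, add_zero] at hlim
  refine ge_of_tendsto hlim ?_
  filter_upwards [Filter.eventually_ge_atTop (1 + a / |v|)] with r hr
  have hr0 : 0 < r := lt_of_lt_of_le (by positivity) hr
  have hc : -v * r ≠ 0 := mul_ne_zero (neg_ne_zero.2 hv) hr0.ne'
  have hvc : v * (-v * r) ≤ 0 := by nlinarith
  have hca : v * (-v * r) ≤ v * a := by
    have h1 : a ≤ r * |v| := by
      rw [← div_le_iff₀ hv']; linarith
    have h2 : -(|v| * a) ≤ v * a := by
      have := neg_abs_le v
      nlinarith
    nlinarith [sq_abs v]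
  have key := perron_rect a (-v * r) T v ha hc hT
  have hif : (if -v * r < 0 then 2 * π * Complex.I else 0) =
      Complex.I * (if 0 ≤ v then 2 * π else 0) := by
    by_cases h : 0 ≤ v
    · have : 0 < v := lt_of_le_of_ne h hv.symm
      rw [if_pos (by nlinarith), if_pos h]; push_cast; ring
    · rw [if_neg (by push Not at h ⊢; nlinarith), if_neg h]; simp
  rw [hif, ← mul_sub] at key
  have h0 := congrArg norm key
  rw [norm_mul, Complex.norm_I, one_mul] at h0
  rw [h0]
  refine (norm_add_le _ _).trans (add_le_add (horiz_int_bound _ _ _ _ hT hv hca) ?_)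
  rw [norm_mul, Complex.norm_I, one_mul]
  refine (norm_perronK_le _ _ _ hT hc hvc).trans (le_of_eq ?_)
  rw [abs_mul, abs_neg, abs_of_pos hr0]
  field_simp

/-- The bounded half of the Perron estimate, valid at `v = 0` as well, where the kernel is
`2 arctan(T/a)`. -/
lemma perron_bound_near (a T v : ℝ) (ha : 0 < a) (hT : 0 < T) :
    ‖perronK a T v - (if 0 ≤ v then 2 * π else 0)‖ ≤ exp (v * a) * (1 + 2 * π) := by
  by_cases hv : v = 0
  · subst hv
    have : perronK a T 0 = 2 * (arctan (T / a) : ℝ) := by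
      rw [← arc_vert a T ha.ne']
      simp [perronK]
    rw [this, if_pos le_rfl]
    have h1 := arctan_lt_pi_div_two (T / a)
    have h2 : 0 < arctan (T / a) := arctan_pos.2 (by positivity)
    have e : (2 : ℂ) * (arctan (T / a) : ℝ) - (2 * π : ℝ) = ((2 * arctan (T / a) - 2 * π : ℝ) : ℂ) := by
      push_cast; ring
    rw [e, Complex.norm_real, norm_eq_abs, zero_mul, exp_zero, abs_le]
    constructor <;> linarith [pi_pos]
  · exact (perron_bound a T v ha hT hv).trans (by gcongr; exact min_le_right _ _)

/-! ### Sums over smooth numbers -/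

/-- The positive integers all of whose prime factors are at most `y`, that is, less than
`⌊y⌋₊ + 1`. -/
abbrev SmoothIdx (y : ℝ) : Type := Nat.smoothNumbers (⌊y⌋₊ + 1)

lemma hasSum_zetaC (s : ℂ) (hs : 0 < s.re) (y : ℝ) :
    HasSum (fun n : SmoothIdx y => ((n : ℕ) : ℂ) ^ (-s)) (zetaC s y) := by
  have hs0 : s ≠ 0 := by
    rintro rfl
    simp at hs
  have h := (EulerProduct.summable_and_hasSum_smoothNumbers_prod_primesBelow_geometric
    (f := (riemannZetaSummandHom hs0 : ℕ →* ℂ)) ?_ (⌊y⌋₊ + 1)).2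
  · exact h
  · intro p hp
    change ‖(p : ℂ) ^ (-s)‖ < 1
    rw [Complex.norm_natCast_cpow_of_pos hp.pos]
    exact rpow_lt_one_of_one_lt_of_neg (by exact_mod_cast hp.one_lt) (by simpa using hs)

lemma zetaC_ofReal (α y : ℝ) : zetaC (α : ℂ) y = ((zetaR α y : ℝ) : ℂ) := by
  unfold zetaC zetaR
  push_cast
  refine Finset.prod_congr rfl (fun p _ => ?_)
  rw [Complex.ofReal_cpow (Nat.cast_nonneg p)]
  push_cast
  rfl

lemma hasSum_zetaR (α y : ℝ) (hα : 0 < α) :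
    HasSum (fun n : SmoothIdx y => ((n : ℕ) : ℝ) ^ (-α)) (zetaR α y) := by
  have h := hasSum_zetaC (α : ℂ) (by simpa using hα) y
  rw [zetaC_ofReal, ← Complex.hasSum_ofReal] at *
  convert h using 2 with n
  rw [Complex.ofReal_cpow (Nat.cast_nonneg _)]
  push_cast
  rfl

lemma smooth_pos {y : ℝ} (n : SmoothIdx y) : (0 : ℝ) < ((n : ℕ) : ℝ) := by
  exact_mod_cast Nat.pos_of_ne_zero (Nat.ne_zero_of_mem_smoothNumbers n.2)

/-- `(x/n)^s` in exponential form. -/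
lemma cpow_mul_cpow_neg (x : ℝ) (hx : 0 < x) {y : ℝ} (n : SmoothIdx y) (s : ℂ) :
    ((n : ℕ) : ℂ) ^ (-s) * (x : ℂ) ^ s = Complex.exp ((log (x / (n : ℕ)) : ℝ) * s) := by
  have hn := smooth_pos n
  have hn' : ((n : ℕ) : ℂ) ≠ 0 := by exact_mod_cast hn.ne'
  have hx' : (x : ℂ) ≠ 0 := by exact_mod_cast hx.ne'
  rw [Complex.cpow_def_of_ne_zero hn', Complex.cpow_def_of_ne_zero hx', ← Complex.exp_add,
    log_div hx.ne' hn.ne', Complex.ofReal_sub, Complex.ofReal_log hx.le, Complex.ofReal_log hn.le]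
  congr 1
  push_cast
  ring

lemma rpow_mul_rpow_neg (x : ℝ) (hx : 0 < x) {y : ℝ} (n : SmoothIdx y) (α : ℝ) :
    ((n : ℕ) : ℝ) ^ (-α) * x ^ α = exp (log (x / (n : ℕ)) * α) := by
  have hn := smooth_pos n
  rw [rpow_def_of_pos hn, rpow_def_of_pos hx, ← exp_add, log_div hx.ne' hn.ne']
  congr 1
  ring

lemma hasSum_exp (x y α : ℝ) (hx : 0 < x) (hα : 0 < α) :
    HasSum (fun n : SmoothIdx y => exp (log (x / (n : ℕ)) * α)) (x ^ α * zetaR α y) := by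
  have h := (hasSum_zetaR α y hα).mul_right (x ^ α)
  simp_rw [rpow_mul_rpow_neg x hx] at h
  rwa [mul_comm] at h

lemma hasSum_cexp (x y : ℝ) (s : ℂ) (hx : 0 < x) (hs : 0 < s.re) :
    HasSum (fun n : SmoothIdx y => Complex.exp ((log (x / (n : ℕ)) : ℝ) * s))
      (zetaC s y * (x : ℂ) ^ s) := by
  have h := (hasSum_zetaC s hs y).mul_right ((x : ℂ) ^ s)
  simp_rw [cpow_mul_cpow_neg x hx] at h
  exact h

lemma hasSum_perronK (x y α T : ℝ) (hx : 0 < x) (hα : 0 < α) :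
    HasSum (fun n : SmoothIdx y => perronK α T (log (x / (n : ℕ))))
      (∫ t in (-T)..T, zetaC ((α : ℂ) + (t : ℂ) * Complex.I) y *
        (x : ℂ) ^ ((α : ℂ) + (t : ℂ) * Complex.I) / ((α : ℂ) + (t : ℂ) * Complex.I)) := by
  have hs := (hasSum_exp x y α hx hα).div_const α
  refine intervalIntegral.hasSum_integral_of_dominated_convergence
    (fun n _ => exp (log (x / (n : ℕ)) * α) / α) ?_ ?_ ?_ ?_ ?_
  · intro n
    exact (Continuous.div (by fun_prop) (by fun_prop) (vert_ne hα.ne')).aestronglyMeasurable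
  · intro n
    refine Filter.Eventually.of_forall (fun t _ => ?_)
    rw [norm_div, Complex.norm_exp]
    have h1 : (((log (x / (n : ℕ)) : ℝ) : ℂ) * ((α : ℂ) + (t : ℂ) * Complex.I)).re =
      log (x / (n : ℕ)) * α := by simp
    have h2 : α ≤ ‖(α : ℂ) + (t : ℂ) * Complex.I‖ := by
      have := Complex.abs_re_le_norm ((α : ℂ) + (t : ℂ) * Complex.I)
      simp [abs_of_pos hα] at this
      exact this
    rw [h1]
    gcongr
  · exact Filter.Eventually.of_forall (fun t _ => hs.summable)
  · exact intervalIntegrable_const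
  · refine Filter.Eventually.of_forall (fun t _ => ?_)
    exact (hasSum_cexp x y _ hx (by simpa using hα)).div_const _

lemma hasSum_psi (x y : ℝ) (hy : 0 ≤ y) (hx : 0 < x) :
    HasSum (fun n : SmoothIdx y => (if 0 ≤ log (x / (n : ℕ)) then ((2 * π : ℝ) : ℂ) else 0))
      (2 * π * (Psi x y : ℂ)) := by
  set A := (Finset.Icc 1 ⌊x⌋₊).filter (fun n : ℕ => ∀ p ∈ n.primeFactors, (p : ℝ) ≤ y) with hA
  have hmem : ∀ n ∈ A, n ∈ Nat.smoothNumbers (⌊y⌋₊ + 1) := by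
    intro n hn
    rw [hA, Finset.mem_filter, Finset.mem_Icc] at hn
    refine Nat.mem_smoothNumbers_of_primeFactors_subset (by omega) ?_
    intro p hp
    rw [Finset.mem_range, Nat.lt_succ_iff]
    exact Nat.le_floor (hn.2 p hp)
  have hiff : ∀ n : SmoothIdx y, 0 ≤ log (x / (n : ℕ)) ↔ (n : ℕ) ∈ A := by
    intro n
    have hn := smooth_pos n
    rw [log_nonneg_iff (by positivity), one_le_div hn, hA, Finset.mem_filter, Finset.mem_Icc]
    constructor
    · intro h
      refine ⟨⟨by exact_mod_cast hn, Nat.le_floor h⟩, ?_⟩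
      intro p hp
      have := n.2.2 p (Nat.mem_primeFactors_iff_mem_primeFactorsList.1 hp)
      exact (Nat.le_floor_iff hy).1 (Nat.lt_succ_iff.1 this)
    · intro h
      exact (Nat.le_floor_iff hx.le).1 h.1.2
  have h1 : HasSum (fun n : ℕ => if n ∈ A then ((2 * π : ℝ) : ℂ) else 0) (2 * π * (Psi x y : ℂ)) := by
    have : HasSum (fun n : ℕ => if n ∈ A then ((2 * π : ℝ) : ℂ) else 0)
        (∑ n ∈ A, if n ∈ A then ((2 * π : ℝ) : ℂ) else 0) :=
      hasSum_sum_of_ne_finset_zero (fun b hb => if_neg hb)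
    convert this using 1
    rw [Finset.sum_ite_mem, Finset.inter_self, Finset.sum_const, nsmul_eq_mul]
    have : Psi x y = A.card := rfl
    rw [this]
    push_cast
    ring
  have h2 := (hasSum_subtype_iff_of_support_subset
    (s := (Nat.smoothNumbers (⌊y⌋₊ + 1) : Set ℕ)) ?_).2 h1
  · convert h2 using 2 with n
    simp only [hiff n, Function.comp]
  · intro n hn
    apply hmem
    by_contra h
    exact hn (if_neg h)

/-! ### Size of the Euler product on vertical lines, and the Gaussian-weighted sum -/

lemma exp_two_mul_le (r : ℝ) (h0 : 0 < r) (h1 : r < 1) : exp (2 * r) ≤ (1 + r) / (1 - r) := by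
  have hs := hasSum_log_sub_log_of_abs_lt_one (x := r) (by rw [abs_of_pos h0]; exact h1)
  have h := hs.summable.sum_le_tsum (Finset.range 1) (fun i _ => by positivity)
  rw [hs.tsum_eq, ← log_div (by linarith) (by linarith)] at h
  rw [← le_log_iff_exp_le (div_pos (by linarith) (by linarith))]
  simpa using h

/-- With `c = 1 - cos θ`, the right side is `|1 - r e^{iθ}|²`. By convexity of `exp` on
`[0, 4r]` it suffices to check `c = 2`, which is `exp_two_mul_le`. -/
lemma euler_factor_real (r c : ℝ) (h0 : 0 < r) (h1 : r < 1) (hc0 : 0 ≤ c) (hc2 : c ≤ 2) :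
    (1 - r) ^ 2 * exp (2 * (r * c)) ≤ (1 - r) ^ 2 + 2 * r * c := by
  have hconv := convexOn_exp.2 (Set.mem_univ (0 : ℝ)) (Set.mem_univ (4 * r))
    (show 0 ≤ 1 - c / 2 by linarith) (show 0 ≤ c / 2 by linarith) (by ring)
  simp only [smul_eq_mul, mul_zero, zero_add, exp_zero, mul_one] at hconv
  have e1 : c / 2 * (4 * r) = 2 * (r * c) := by ring
  rw [e1] at hconv
  have h2 := exp_two_mul_le r h0 h1
  have h3 : exp (4 * r) * (1 - r) ^ 2 ≤ (1 + r) ^ 2 := by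
    have h4 : exp (4 * r) = exp (2 * r) ^ 2 := by
      rw [← exp_nat_mul]; congr 1; push_cast; ring
    rw [le_div_iff₀ (by linarith)] at h2
    rw [h4, ← mul_pow]
    exact pow_le_pow_left₀ (mul_nonneg (exp_pos _).le (by linarith)) h2 2
  have h5 := mul_le_mul_of_nonneg_left hconv (sq_nonneg (1 - r))
  nlinarith

lemma norm_euler_factor (p : ℕ) (hp : p.Prime) (α t : ℝ) (hα : 0 < α) :
    ‖(1 - (p : ℂ) ^ (-((α : ℂ) + (t : ℂ) * Complex.I)))⁻¹‖ ≤
      (1 - (p : ℝ) ^ (-α))⁻¹ * exp (-((1 - cos (t * log p)) / (p : ℝ) ^ α)) := by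
  have hp0 : (0 : ℝ) < p := by exact_mod_cast hp.pos
  set r := (p : ℝ) ^ (-α) with hr
  set θ := t * log p with hθ
  have h0 : 0 < r := rpow_pos_of_pos hp0 _
  have h1 : r < 1 := rpow_lt_one_of_one_lt_of_neg (by exact_mod_cast hp.one_lt) (by linarith)
  have e1 : (1 - cos θ) / (p : ℝ) ^ α = r * (1 - cos θ) := by
    rw [hr, rpow_neg hp0.le]; field_simp
  have e2 : (p : ℂ) ^ (-((α : ℂ) + (t : ℂ) * Complex.I)) =
      (r * cos θ : ℝ) + (-(r * sin θ) : ℝ) * Complex.I := by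
    have hpc : (p : ℂ) ≠ 0 := by exact_mod_cast hp0.ne'
    have e3 : Complex.log (p : ℂ) = ((log p : ℝ) : ℂ) := by
      rw [Complex.ofReal_log hp0.le]; simp
    rw [Complex.cpow_def_of_ne_zero hpc, e3, hr, rpow_def_of_pos hp0]
    have e4 : ((log p : ℝ) : ℂ) * -((α : ℂ) + (t : ℂ) * Complex.I) =
      ((log p * -α : ℝ) : ℂ) + ((-θ : ℝ) : ℂ) * Complex.I := by
      rw [hθ]; push_cast; ring
    rw [e4, Complex.exp_add, Complex.exp_mul_I, ← Complex.ofReal_exp, ← Complex.ofReal_cos,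
      ← Complex.ofReal_sin, cos_neg, sin_neg]
    push_cast
    ring
  have hn : ‖1 - (p : ℂ) ^ (-((α : ℂ) + (t : ℂ) * Complex.I))‖ ^ 2 =
      (1 - r) ^ 2 + 2 * r * (1 - cos θ) := by
    have e5 : 1 - (((r * cos θ : ℝ) : ℂ) + (-(r * sin θ) : ℝ) * Complex.I) =
        ((1 - r * cos θ : ℝ) : ℂ) + ((r * sin θ : ℝ) : ℂ) * Complex.I := by
      push_cast; ring
    rw [e2, e5, ← Complex.normSq_eq_norm_sq, Complex.normSq_add_mul_I]
    linear_combination r ^ 2 * sin_sq_add_cos_sq θ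
  have hlow : (1 - r) * exp (r * (1 - cos θ)) ≤
      ‖1 - (p : ℂ) ^ (-((α : ℂ) + (t : ℂ) * Complex.I))‖ := by
    refine le_of_sq_le_sq ?_ (norm_nonneg _)
    rw [hn, mul_pow, ← exp_nat_mul]
    exact euler_factor_real r _ h0 h1 (by linarith [cos_le_one θ]) (by linarith [neg_one_le_cos θ])
  have hpos : 0 < (1 - r) * exp (r * (1 - cos θ)) := mul_pos (by linarith) (exp_pos _)
  rw [norm_inv, e1, exp_neg, ← mul_inv]
  exact inv_anti₀ hpos hlow

lemma norm_zetaC_le (y α t : ℝ) (hα : 0 < α) :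
    ‖zetaC ((α : ℂ) + (t : ℂ) * Complex.I) y‖ ≤ zetaR α y * exp (-W α y 1 t) := by
  unfold zetaC zetaR W
  have hf : (Finset.range (⌊y⌋₊ + 1)).filter (fun p : ℕ => Nat.Prime p ∧ (1 : ℝ) < (p : ℝ)) =
      (Finset.range (⌊y⌋₊ + 1)).filter Nat.Prime := by
    refine Finset.filter_congr (fun p _ => ?_)
    exact ⟨fun h => h.1, fun h => ⟨h, by exact_mod_cast h.one_lt⟩⟩
  rw [hf, ← Finset.sum_neg_distrib, exp_sum, ← Finset.prod_mul_distrib, norm_prod]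
  refine Finset.prod_le_prod (fun _ _ => norm_nonneg _) (fun p hp => ?_)
  exact norm_euler_factor p (Finset.mem_filter.1 hp).2 α t hα

lemma W_abs (α v w t : ℝ) : W α v w |t| = W α v w t := by
  unfold W
  refine Finset.sum_congr rfl (fun p _ => ?_)
  rcases abs_choice t with h | h <;> rw [h]
  rw [neg_mul, cos_neg]

lemma W_nonneg (α v w t : ℝ) : 0 ≤ W α v w t := by
  unfold W
  refine Finset.sum_nonneg (fun p _ => ?_)
  exact div_nonneg (by linarith [cos_le_one (t * log p)]) (by positivity)

lemma continuous_W (α v w : ℝ) : Continuous (W α v w) := by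
  unfold W
  fun_prop

lemma zetaR_pos (α y : ℝ) (hα : 0 < α) : 0 < zetaR α y := by
  unfold zetaR
  refine Finset.prod_pos (fun p hp => ?_)
  have hp' := (Finset.mem_filter.1 hp).2
  have h1 : (p : ℝ) ^ (-α) < 1 :=
    rpow_lt_one_of_one_lt_of_neg (by exact_mod_cast hp'.one_lt) (by linarith)
  exact inv_pos.2 (by linarith)

lemma gauss_fourier (z v : ℝ) (hz : 0 < z) :
    ∫ t : ℝ, Complex.exp (v * ((t : ℂ) * Complex.I)) * (exp (-t ^ 2 / (2 * z ^ 2)) : ℝ) =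
      ((z * sqrt (2 * π) * exp (-(z ^ 2 * v ^ 2) / 2) : ℝ) : ℂ) := by
  have hb : 0 < ((1 / (2 * z ^ 2) : ℝ) : ℂ).re := by
    rw [Complex.ofReal_re]; positivity
  have h := fourierIntegral_gaussian hb (v : ℂ)
  have hz' : (z : ℂ) ≠ 0 := by exact_mod_cast hz.ne'
  have e1 : ∀ t : ℝ, Complex.exp (v * ((t : ℂ) * Complex.I)) *
      (exp (-t ^ 2 / (2 * z ^ 2)) : ℝ) =
      Complex.exp (Complex.I * v * t) *
        Complex.exp (-((1 / (2 * z ^ 2) : ℝ) : ℂ) * (t : ℂ) ^ 2) := by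
    intro t
    rw [Complex.ofReal_exp]
    congr 2
    · ring
    · push_cast; field_simp
  simp_rw [e1]
  rw [h]
  push_cast
  congr 1
  · have e2 : (π : ℂ) / (1 / (2 * (z : ℂ) ^ 2)) = ((2 * π * z ^ 2 : ℝ) : ℂ) := by
      push_cast; field_simp
    have e3 : (1 / 2 : ℂ) = ((1 / 2 : ℝ) : ℂ) := by push_cast; rfl
    rw [e2, e3, ← Complex.ofReal_cpow (by positivity), ← sqrt_eq_rpow,
      sqrt_mul (by positivity), sqrt_sq hz.le]
    push_cast; ring
  · congr 1
    field_simp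
    ring

lemma integrable_gauss (z : ℝ) (hz : 0 < z) :
    Integrable (fun t : ℝ => exp (-t ^ 2 / (2 * z ^ 2))) := by
  have := integrable_exp_neg_mul_sq (b := 1 / (2 * z ^ 2)) (by positivity)
  refine this.congr (Filter.Eventually.of_forall (fun t => ?_))
  simp only
  congr 1
  field_simp

/-- The sum of `(x/n)^α exp(-z² log²(x/n) / 2)` over smooth `n` converges, and its value `G` is
bounded through `J₂`, by writing each Gaussian as a Fourier transform. -/
lemma gauss_sum_le (x y α z : ℝ) (hx : 0 < x) (hα : 0 < α) (hz : 0 < z) :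
    ∃ G : ℝ, HasSum (fun n : SmoothIdx y => exp (log (x / (n : ℕ)) * α) *
      exp (-(z ^ 2 * (log (x / (n : ℕ))) ^ 2) / 2)) G ∧
      z * sqrt (2 * π) * G ≤ x ^ α * zetaR α y * (2 * J₂ y α z) := by
  have hE := hasSum_exp x y α hx hα
  set F : SmoothIdx y → ℝ → ℂ := fun n t =>
    Complex.exp ((log (x / (n : ℕ)) : ℝ) * ((α : ℂ) + (t : ℂ) * Complex.I)) *
      (exp (-t ^ 2 / (2 * z ^ 2)) : ℝ) with hF
  have hnorm : ∀ n t, ‖F n t‖ = exp (log (x / (n : ℕ)) * α) * exp (-t ^ 2 / (2 * z ^ 2)) := by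
    intro n t
    rw [hF]
    simp only
    rw [norm_mul, Complex.norm_exp, Complex.norm_real, norm_eq_abs, abs_of_pos (exp_pos _)]
    simp
  have hgi := integrable_gauss z hz
  have hFi : ∀ n, Integrable (F n) := by
    intro n
    refine (hgi.const_mul (exp (log (x / (n : ℕ)) * α))).mono' ?_ ?_
    · exact Continuous.aestronglyMeasurable (by rw [hF]; fun_prop)
    · exact Filter.Eventually.of_forall (fun t => (hnorm n t).le)
  have hFs : Summable fun n => ∫ t, ‖F n t‖ := by
    simp_rw [hnorm, integral_const_mul]
    exact hE.summable.mul_right _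
  have key := hasSum_integral_of_summable_integral_norm hFi hFs
  have e1 : ∀ n, ∫ t, F n t = ((z * sqrt (2 * π) * (exp (log (x / (n : ℕ)) * α) *
      exp (-(z ^ 2 * (log (x / (n : ℕ))) ^ 2) / 2)) : ℝ) : ℂ) := by
    intro n
    have e2 : ∀ t, F n t = (exp (log (x / (n : ℕ)) * α) : ℝ) *
      (Complex.exp ((log (x / (n : ℕ)) : ℝ) * ((t : ℂ) * Complex.I)) *
        (exp (-t ^ 2 / (2 * z ^ 2)) : ℝ)) := by
      intro t
      rw [hF, Complex.ofReal_exp (log (x / (n : ℕ)) * α), ← mul_assoc, ← Complex.exp_add]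
      push_cast
      ring_nf
    simp_rw [e2]
    rw [integral_const_mul, gauss_fourier _ _ hz, ← Complex.ofReal_mul]
    congr 1
    ring
  have e3 : ∀ t, ∑' n, F n t = zetaC ((α : ℂ) + (t : ℂ) * Complex.I) y *
      (x : ℂ) ^ ((α : ℂ) + (t : ℂ) * Complex.I) * (exp (-t ^ 2 / (2 * z ^ 2)) : ℝ) := by
    intro t
    exact ((hasSum_cexp x y _ hx (by simpa using hα)).mul_right _).tsum_eq
  simp_rw [e1, e3] at key
  set Z : ℂ := ∫ t : ℝ, zetaC ((α : ℂ) + (t : ℂ) * Complex.I) y *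
      (x : ℂ) ^ ((α : ℂ) + (t : ℂ) * Complex.I) * (exp (-t ^ 2 / (2 * z ^ 2)) : ℝ) with hZ
  have hZn : ‖Z‖ ≤ x ^ α * zetaR α y * (2 * J₂ y α z) := by
    have hJ : 2 * J₂ y α z = ∫ t : ℝ, exp (-t ^ 2 / (2 * z ^ 2) - W α y 1 t) := by
      unfold J₂
      rw [← integral_comp_abs (f := fun t => exp (-t ^ 2 / (2 * z ^ 2) - W α y 1 t))]
      simp_rw [W_abs, sq_abs]
    rw [hJ, ← integral_const_mul]
    refine norm_integral_le_of_norm_le ?_ (Filter.Eventually.of_forall (fun t => ?_))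
    · refine Integrable.const_mul ?_ _
      refine hgi.mono' ?_ ?_
      · have := continuous_W α y 1
        exact Continuous.aestronglyMeasurable (by fun_prop)
      · refine Filter.Eventually.of_forall (fun t => ?_)
        rw [norm_eq_abs, abs_of_pos (exp_pos _)]
        exact exp_le_exp.2 (by linarith [W_nonneg α y 1 t])
    · rw [norm_mul, norm_mul, Complex.norm_cpow_eq_rpow_re_of_pos hx, Complex.norm_real,
        norm_eq_abs, abs_of_pos (exp_pos _)]
      have h1 : ((α : ℂ) + (t : ℂ) * Complex.I).re = α := by simp
      have h2 := norm_zetaC_le y α t hα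
      rw [h1, sub_eq_neg_add, exp_add]
      have h3 : 0 < x ^ α := rpow_pos_of_pos hx α
      calc _ ≤ zetaR α y * exp (-W α y 1 t) * x ^ α * exp (-t ^ 2 / (2 * z ^ 2)) := by gcongr
        _ = _ := by ring
  have key2 := Complex.hasSum_re key
  simp only [Complex.ofReal_re] at key2
  have hc : z * sqrt (2 * π) ≠ 0 := by positivity
  refine ⟨Z.re / (z * sqrt (2 * π)), ?_, ?_⟩
  · have := key2.div_const (z * sqrt (2 * π))
    simp_rw [mul_div_cancel_left₀ _ hc] at this
    exact this
  · rw [mul_div_cancel₀ _ hc]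
    exact (Complex.re_le_norm Z).trans hZn

/-! ### Assembly -/

/-- Close to `v = 0` the constant bound for the Perron kernel is absorbed by a Gaussian of width
`1/z`: there `z |v| ≤ 1/2`, so the Gaussian factor is at least `e^{-1/8}`. -/
lemma near_window (d T z v : ℝ) (hz : 1 < z)
    (hzdef : z = (exp (2 * T ^ (d - 1)) - 1)⁻¹) (hv : |v| < T ^ (d - 1)) :
    1 + 2 * π ≤ 2 * π * (sqrt (exp 1) * exp (-(z ^ 2 * v ^ 2) / 2)) := by
  have hz0 : 0 < z := by linarith
  have h1 : 2 * T ^ (d - 1) ≤ z⁻¹ := by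
    rw [hzdef, inv_inv]
    linarith [add_one_le_exp (2 * T ^ (d - 1))]
  have h2 : z * |v| ≤ 1 / 2 := by
    have : |v| ≤ z⁻¹ / 2 := by linarith
    calc z * |v| ≤ z * (z⁻¹ / 2) := by gcongr
      _ = 1 / 2 := by field_simp
  have h3 : z ^ 2 * v ^ 2 ≤ 1 / 4 := by
    rw [← sq_abs v, ← mul_pow]
    have : 0 ≤ z * |v| := by positivity
    nlinarith
  have h4 : sqrt (exp 1) = exp (1 / 2) := by
    rw [sqrt_eq_iff_mul_self_eq (exp_pos _).le (exp_pos _).le, ← exp_add]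
    norm_num
  rw [h4, ← exp_add]
  have h5 : 11 / 8 ≤ exp (1 / 2 + -(z ^ 2 * v ^ 2) / 2) := by
    refine le_trans ?_ (add_one_le_exp _)
    linarith
  nlinarith [pi_gt_three]

/-- A single bound valid for every `n`, combining the far and near ranges of `v = log (x / n)`. -/
lemma perron_term_bound (α d T z v : ℝ) (hα : 0 < α) (hT : 1 < T) (hz : 1 < z)
    (hzdef : z = (exp (2 * T ^ (d - 1)) - 1)⁻¹) :
    ‖perronK α T v - (if 0 ≤ v then ((2 * π : ℝ) : ℂ) else 0)‖ ≤
      exp (v * α) * (2 * T ^ (-d)) +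
        2 * π * sqrt (exp 1) * (exp (v * α) * exp (-(z ^ 2 * v ^ 2) / 2)) := by
  have hcast : (if 0 ≤ v then ((2 * π : ℝ) : ℂ) else 0) =
      ((if 0 ≤ v then 2 * π else 0 : ℝ) : ℂ) := by
    split_ifs <;> simp
  rw [hcast]
  have hT0 : 0 < T := by linarith
  have hpw : 0 < T ^ (d - 1) := rpow_pos_of_pos hT0 _
  have hpd : 0 < T ^ (-d) := rpow_pos_of_pos hT0 _
  by_cases h : |v| < T ^ (d - 1)
  · refine (perron_bound_near α T v hα hT0).trans ?_
    have h1 := mul_le_mul_of_nonneg_left (near_window d T z v hz hzdef h) (exp_pos (v * α)).le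
    have h2 : 0 < exp (v * α) * (2 * T ^ (-d)) := by positivity
    linarith
  · push Not at h
    have hv : v ≠ 0 := by
      rintro rfl
      rw [abs_zero] at h
      linarith
    refine (perron_bound α T v hα hT0 hv).trans ?_
    have h1 : 2 / (T * |v|) ≤ 2 * T ^ (-d) := by
      have e : T * T ^ (d - 1) = T ^ d := by
        rw [rpow_sub_one hT0.ne']; field_simp
      have h2 : T ^ d ≤ T * |v| := by
        rw [← e]; gcongr
      have h3 : 0 < T ^ d := rpow_pos_of_pos hT0 _
      rw [rpow_neg hT0.le, ← div_eq_mul_inv]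
      gcongr
    have h2 := mul_le_mul_of_nonneg_left ((min_le_left _ (1 + 2 * π)).trans h1) (exp_pos (v * α)).le
    have h3 : 0 < 2 * π * sqrt (exp 1) * (exp (v * α) * exp (-(z ^ 2 * v ^ 2) / 2)) := by
      positivity
    linarith

lemma continuous_zetaC_line (y α : ℝ) (hα : 0 < α) :
    Continuous (fun t : ℝ => zetaC ((α : ℂ) + (t : ℂ) * Complex.I) y) := by
  unfold zetaC
  refine continuous_finsetProd _ (fun p hp => ?_)
  have hp' := (Finset.mem_filter.1 hp).2
  refine Continuous.inv₀ ?_ ?_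
  · refine continuous_const.sub ?_
    exact Continuous.const_cpow (by fun_prop) (Or.inl (by exact_mod_cast hp'.ne_zero))
  · intro t h
    have h1 : ‖(p : ℂ) ^ (-((α : ℂ) + (t : ℂ) * Complex.I))‖ < 1 := by
      rw [Complex.norm_natCast_cpow_of_pos hp'.pos]
      exact rpow_lt_one_of_one_lt_of_neg (by exact_mod_cast hp'.one_lt) (by simpa using hα)
    rw [← sub_eq_zero.1 h] at h1
    simp at h1

/-- The two segments `T₀ ≤ |t| ≤ T` of the contour contribute equally, since `W` is even. -/
lemma contour_tail (x y α T₀ T : ℝ) (hx : 0 < x) (hα : 0 < α) (hT₀T : T₀ ≤ T) :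
    ‖(∫ t in (-T)..T, zetaC ((α : ℂ) + (t : ℂ) * Complex.I) y *
        (x : ℂ) ^ ((α : ℂ) + (t : ℂ) * Complex.I) / ((α : ℂ) + (t : ℂ) * Complex.I)) -
      ∫ t in (-T₀)..T₀, zetaC ((α : ℂ) + (t : ℂ) * Complex.I) y *
        (x : ℂ) ^ ((α : ℂ) + (t : ℂ) * Complex.I) / ((α : ℂ) + (t : ℂ) * Complex.I)‖ ≤
      2 * (x ^ α * zetaR α y * J₁ y α T₀ T) := by
  set f : ℝ → ℂ := fun t => zetaC ((α : ℂ) + (t : ℂ) * Complex.I) y *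
        (x : ℂ) ^ ((α : ℂ) + (t : ℂ) * Complex.I) / ((α : ℂ) + (t : ℂ) * Complex.I) with hf
  set g : ℝ → ℝ := fun t => exp (-W α y 1 t) / sqrt (α ^ 2 + t ^ 2) with hg
  have hx' : (x : ℂ) ≠ 0 := by exact_mod_cast hx.ne'
  have hfc : Continuous f := by
    refine Continuous.div ((continuous_zetaC_line y α hα).mul ?_) (by fun_prop) (vert_ne hα.ne')
    exact Continuous.const_cpow (by fun_prop) (Or.inl hx')
  have hgc : Continuous g := by
    have := continuous_W α y 1
    refine Continuous.div (by fun_prop) (by fun_prop) ?_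
    intro t
    positivity
  have hfg : ∀ t, ‖f t‖ ≤ x ^ α * zetaR α y * g t := by
    intro t
    have h1 : ((α : ℂ) + (t : ℂ) * Complex.I).re = α := by simp
    have h2 := norm_zetaC_le y α t hα
    have h3 : 0 < x ^ α := rpow_pos_of_pos hx α
    have h4 : 0 < sqrt (α ^ 2 + t ^ 2) := by positivity
    simp only [hf, hg]
    rw [norm_div, norm_mul, Complex.norm_cpow_eq_rpow_re_of_pos hx, h1, Complex.norm_add_mul_I]
    calc _ ≤ zetaR α y * exp (-W α y 1 t) * x ^ α / sqrt (α ^ 2 + t ^ 2) := by gcongr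
      _ = _ := by ring
  have hgi : ∀ a b, IntervalIntegrable (fun t => x ^ α * zetaR α y * g t) volume a b :=
    fun a b => (continuous_const.mul hgc).intervalIntegrable a b
  have hfi : ∀ a b, IntervalIntegrable f volume a b := fun a b => hfc.intervalIntegrable a b
  have hsplit : (∫ t in (-T)..T, f t) - (∫ t in (-T₀)..T₀, f t) =
      (∫ t in (-T)..(-T₀), f t) + ∫ t in T₀..T, f t := by
    rw [← intervalIntegral.integral_add_adjacent_intervals (hfi (-T) (-T₀)) (hfi (-T₀) T),
      ← intervalIntegral.integral_add_adjacent_intervals (hfi (-T₀) T₀) (hfi T₀ T)]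
    ring
  have hJ : J₁ y α T₀ T = ∫ t in T₀..T, g t := rfl
  have hJ' : J₁ y α T₀ T = ∫ t in (-T)..(-T₀), g t := by
    rw [hJ, ← intervalIntegral.integral_comp_neg]
    refine intervalIntegral.integral_congr (fun t _ => ?_)
    simp only [hg]
    rw [← W_abs, ← W_abs α y 1 (-t), abs_neg, neg_sq]
  have hA : ‖∫ t in T₀..T, f t‖ ≤ x ^ α * zetaR α y * J₁ y α T₀ T := by
    rw [hJ, ← intervalIntegral.integral_const_mul]
    exact intervalIntegral.norm_integral_le_of_norm_le hT₀T
      (Filter.Eventually.of_forall (fun t _ => hfg t)) (hgi _ _)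
  have hB : ‖∫ t in (-T)..(-T₀), f t‖ ≤ x ^ α * zetaR α y * J₁ y α T₀ T := by
    rw [hJ', ← intervalIntegral.integral_const_mul]
    exact intervalIntegral.norm_integral_le_of_norm_le (by linarith)
      (Filter.Eventually.of_forall (fun t _ => hfg t)) (hgi _ _)
  rw [hsplit]
  refine (norm_add_le _ _).trans ?_
  linarith

lemma contour_re (x y α T₀ : ℝ) : (contourInt x y α T₀).re =
    (∫ t in (-T₀)..T₀, zetaC ((α : ℂ) + (t : ℂ) * Complex.I) y *
        (x : ℂ) ^ ((α : ℂ) + (t : ℂ) * Complex.I) / ((α : ℂ) + (t : ℂ) * Complex.I)).re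
      / (2 * π) := by
  unfold contourInt
  set Φ := ∫ t in (-T₀)..T₀, zetaC ((α : ℂ) + (t : ℂ) * Complex.I) y *
        (x : ℂ) ^ ((α : ℂ) + (t : ℂ) * Complex.I) / ((α : ℂ) + (t : ℂ) * Complex.I)
  have hp : (π : ℂ) ≠ 0 := by exact_mod_cast pi_ne_zero
  have : 1 / (2 * (π : ℂ) * Complex.I) * (Complex.I * Φ) = ((1 / (2 * π) : ℝ) : ℂ) * Φ := by
    push_cast
    field_simp [Complex.I_ne_zero]
  rw [this, Complex.re_ofReal_mul]
  ring

lemma psi_contour_bound (x y α d T T₀ z : ℝ) (hy : 2 ≤ y) (hx : 0 < x)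
    (hα : 0 < α) (hT : 1 < T) (hzdef : z = (exp (2 * T ^ (d - 1)) - 1)⁻¹) (hz : 1 < z)
    (hT₀T : T₀ ≤ T) :
    |(Psi x y : ℝ) - (contourInt x y α T₀).re| ≤ x ^ α * zetaR α y / π *
      (J₁ y α T₀ T + T ^ (-d) + exp (α ^ 2 / (2 * z ^ 2)) * sqrt (2 * π * exp 1) *
        J₂ y α z / z) := by
  have hz0 : 0 < z := by linarith
  have htail := contour_tail x y α T₀ T hx hα hT₀T
  have hK := hasSum_perronK x y α T hx hα
  rw [contour_re]
  set ΦT := ∫ t in (-T)..T, zetaC ((α : ℂ) + (t : ℂ) * Complex.I) y *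
        (x : ℂ) ^ ((α : ℂ) + (t : ℂ) * Complex.I) / ((α : ℂ) + (t : ℂ) * Complex.I)
  set Φ := ∫ t in (-T₀)..T₀, zetaC ((α : ℂ) + (t : ℂ) * Complex.I) y *
        (x : ℂ) ^ ((α : ℂ) + (t : ℂ) * Complex.I) / ((α : ℂ) + (t : ℂ) * Complex.I)
  set C := x ^ α * zetaR α y with hC
  have hC0 : 0 < C := mul_pos (rpow_pos_of_pos hx α) (zetaR_pos α y hα)
  obtain ⟨G, hG, hGle⟩ := gauss_sum_le x y α z hx hα hz0
  have hdiff := hK.sub (hasSum_psi x y (by linarith) hx)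
  have hbd := ((hasSum_exp x y α hx hα).mul_right (2 * T ^ (-d))).add
    (hG.mul_left (2 * π * sqrt (exp 1)))
  have hmain : ‖ΦT - 2 * π * (Psi x y : ℂ)‖ ≤
      C * (2 * T ^ (-d)) + 2 * π * sqrt (exp 1) * G := by
    rw [← hdiff.tsum_eq]
    exact tsum_of_norm_bounded hbd (fun n => perron_term_bound α d T z _ hα hT hz hzdef)
  have hJ2 : 0 ≤ J₂ y α z := by
    unfold J₂
    exact setIntegral_nonneg measurableSet_Ioi (fun t _ => (exp_pos _).le)
  have hGauss : π * sqrt (exp 1) * G ≤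
      C * (exp (α ^ 2 / (2 * z ^ 2)) * sqrt (2 * π * exp 1) * J₂ y α z / z) := by
    have hs : sqrt (2 * π) * sqrt (2 * π) = 2 * π := mul_self_sqrt (by positivity)
    have hs0 : 0 < sqrt (2 * π) := by positivity
    rw [sqrt_mul (by positivity) (exp 1)]
    have h1 : G ≤ C * (2 * J₂ y α z) / (z * sqrt (2 * π)) := by
      rw [le_div_iff₀ (by positivity)]
      linarith
    have h2 : 1 ≤ exp (α ^ 2 / (2 * z ^ 2)) := one_le_exp (by positivity)
    have h3 : 0 ≤ C * (sqrt (2 * π) * sqrt (exp 1) * J₂ y α z / z) := by positivity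
    calc π * sqrt (exp 1) * G ≤ π * sqrt (exp 1) * (C * (2 * J₂ y α z) / (z * sqrt (2 * π))) := by
          gcongr
      _ = C * (sqrt (2 * π) * sqrt (exp 1) * J₂ y α z / z) := by
          field_simp
          rw [sq_sqrt (by positivity)]
          ring
      _ ≤ exp (α ^ 2 / (2 * z ^ 2)) * (C * (sqrt (2 * π) * sqrt (exp 1) * J₂ y α z / z)) :=
          le_mul_of_one_le_left h3 h2
      _ = _ := by ring
  have hre : |2 * π * (Psi x y : ℝ) - Φ.re| ≤ C * (2 * T ^ (-d)) + 2 * π * sqrt (exp 1) * G +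
      2 * (C * J₁ y α T₀ T) := by
    have h1 := Complex.abs_re_le_norm (2 * π * (Psi x y : ℂ) - Φ)
    have h2 : (2 * π * (Psi x y : ℂ) - Φ).re = 2 * π * (Psi x y : ℝ) - Φ.re := by
      have : (2 * π * (Psi x y : ℂ)) = ((2 * π * (Psi x y : ℝ) : ℝ) : ℂ) := by push_cast; rfl
      rw [Complex.sub_re, this, Complex.ofReal_re]
    have h3 : 2 * π * (Psi x y : ℂ) - Φ = -(ΦT - 2 * π * (Psi x y : ℂ)) + (ΦT - Φ) := by ring
    rw [h2, h3] at h1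
    refine h1.trans ((norm_add_le _ _).trans ?_)
    rw [norm_neg]
    exact add_le_add hmain htail
  have e : (Psi x y : ℝ) - Φ.re / (2 * π) = (2 * π * (Psi x y : ℝ) - Φ.re) / (2 * π) := by
    field_simp
  rw [e, abs_div, abs_of_pos (show 0 < 2 * π by positivity), div_le_iff₀ (by positivity)]
  have e2 : ∀ B : ℝ, C / π * B * (2 * π) = 2 * (C * B) := by
    intro B; field_simp
  rw [e2]
  linarith

theorem stmt_15 (x y α d T T₀ z J₀m J₀p : ℝ) (hy : 2 ≤ y) (hxy : y ≤ x)
    (hα0 : 0 < α) (hα1 : α ≤ 1) (hd0 : 0 < d) (hd1 : d < 1) (hT : 1 < T)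
    (hzdef : z = (Real.exp (2 * T ^ (d - 1)) - 1)⁻¹) (hz : 1 < z)
    (hT₀0 : 0 < T₀) (hT₀T : T₀ ≤ T)
    (hreal : (contourInt x y α T₀).im = 0)
    (hlow : x ^ α * zetaR α y / Real.pi * J₀m ≤ (contourInt x y α T₀).re)
    (hupp : (contourInt x y α T₀).re ≤ x ^ α * zetaR α y / Real.pi * J₀p) :
    (Psi x y : ℝ) ≥ x ^ α * zetaR α y / Real.pi *
        (J₀m - J₁ y α T₀ T - T ^ (-d) -
          Real.exp (α ^ 2 / (2 * z ^ 2)) * Real.sqrt (2 * Real.pi * Real.exp 1) *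
            J₂ y α z / z) ∧
    (Psi x y : ℝ) ≤ x ^ α * zetaR α y / Real.pi *
        (J₀p + J₁ y α T₀ T + T ^ (-d) +
          Real.exp (α ^ 2 / (2 * z ^ 2)) * Real.sqrt (2 * Real.pi * Real.exp 1) *
            J₂ y α z / z) := by
  have h := abs_le.1 (psi_contour_bound x y α d T T₀ z hy (by linarith) hα0 hT hzdef hz hT₀T)
  constructor
  · have := h.1
    rw [ge_iff_le, sub_sub, sub_sub, mul_sub, ← add_assoc]
    linarith
  · have := h.2
    rw [add_assoc, add_assoc, mul_add, ← add_assoc]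
    linarith
end

section
/- (Granville–Soundararajan.) If 3 ≤ y ≤ x and 1/log y ≤ σ ≤ 1, then Ψ(x,y) ≤ 1.39 · ( y^{1−σ}/log x ) · x^σ · ζ(σ,y). -/
/-! ### The prime-counting function up to `65812` -/

/-- A running upper bound for the prime-counting function on the `2 ^ k` integers after `n`: starting
from `c`, the count goes up at each integer coprime to `P`, and then the inequality
`m ^ (c + 1) ≤ 4 ^ m` is tested with the new count `c`. The value is `none` if a test fails. -/
def scan (P : ℕ) : ℕ → ℕ → ℕ → Option ℕ
  | 0, n, c =>
    bif Nat.beq (Nat.gcd (n + 1) P) 1 then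
      bif Nat.ble ((n + 1) ^ (c + 2)) (4 ^ (n + 1)) then some (c + 1) else none
    else some c
  | k + 1, n, c => (scan P k n c).bind fun c' => scan P k (n + 2 ^ k) c'

/-- The number `c` bounds `π n`, and `(c + 1) log n ≤ n log 4`. -/
def GoodBound (n c : ℕ) : Prop :=
  Nat.primeCounting n ≤ c ∧ ((c : ℝ) + 1) * Real.log n ≤ n * Real.log 4

lemma exp_one_le_of_three_le {n : ℕ} (hn : 3 ≤ n) : Real.exp 1 ≤ (n : ℝ) := by
  have h : (3 : ℝ) ≤ n := by exact_mod_cast hn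
  linarith [Real.exp_one_lt_d9]

/-- The inequality `C log b ≤ b D` propagates upwards, since `log b / b` decreases beyond `e`. -/
lemma mul_log_le_of_le {C D a b : ℝ} (hC : 0 ≤ C) (ha : Real.exp 1 ≤ a) (hab : a ≤ b)
    (h : C * Real.log a ≤ a * D) : C * Real.log b ≤ b * D := by
  have ha0 : 0 < a := (Real.exp_pos 1).trans_le ha
  have hb0 : 0 < b := ha0.trans_le hab
  have h1 := Real.log_div_self_antitoneOn (Set.mem_Ici.2 ha) (Set.mem_Ici.2 (ha.trans hab)) hab
  have h2 : C * (Real.log a / a) ≤ D := by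
    rw [mul_div_assoc', div_le_iff₀ ha0]; linarith
  have h3 : C * (Real.log b / b) ≤ D := (mul_le_mul_of_nonneg_left h1 hC).trans h2
  rw [mul_div_assoc', div_le_iff₀ hb0] at h3
  linarith

/-- The passage from the integer inequality `n ^ c ≤ 4 ^ n` to logarithms. -/
lemma mul_log_le_of_pow_le {n c : ℕ} (hn : 0 < n) (h : n ^ c ≤ 4 ^ n) :
    (c : ℝ) * Real.log n ≤ n * Real.log 4 := by
  have h1 : ((n : ℝ)) ^ c ≤ 4 ^ n := by exact_mod_cast h
  have h2 := Real.log_le_log (by positivity) h1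
  rwa [Real.log_pow, Real.log_pow] at h2

lemma primeCounting_succ_le (n : ℕ) :
    Nat.primeCounting (n + 1) ≤ Nat.primeCounting n + if (n + 1).Prime then 1 else 0 := by
  simp only [Nat.primeCounting, Nat.primeCounting', Nat.count_succ _ (n + 1)]
  rfl

/-- If no prime above `n` divides `P`, then every prime met by the scan is counted by it. -/
lemma scan_spec (P : ℕ) : ∀ k n c d : ℕ, 3 ≤ n →
    (∀ p, p.Prime → n < p → Nat.gcd p P = 1) → GoodBound n c → scan P k n c = some d →
    GoodBound (n + 2 ^ k) d ∧ ∀ m, n ≤ m → m ≤ n + 2 ^ k → ∃ e, GoodBound m e := by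
  intro k
  induction k with
  | zero =>
    intro n c d hn hP hg hs
    have key : GoodBound (n + 1) d := by
      have hsucc := primeCounting_succ_le n
      rw [scan] at hs
      by_cases hgcd : Nat.gcd (n + 1) P = 1
      · by_cases hle : (n + 1) ^ (c + 2) ≤ 4 ^ (n + 1)
        · have : d = c + 1 := by
            rw [hgcd, Nat.ble_eq_true_of_le hle] at hs
            simpa using hs.symm
          subst this
          refine ⟨?_, ?_⟩
          · have := hg.1
            split_ifs at hsucc <;> omega
          · have h3 := mul_log_le_of_pow_le (Nat.succ_pos n) hle
            push_cast at h3 ⊢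
            linarith
        · have hf : Nat.ble ((n + 1) ^ (c + 2)) (4 ^ (n + 1)) = false := by
            rw [Bool.eq_false_iff]; exact fun h => hle (Nat.le_of_ble_eq_true h)
          rw [hgcd, hf] at hs
          simp at hs
      · have hb : Nat.beq (Nat.gcd (n + 1) P) 1 = false := by
          rw [Bool.eq_false_iff]; exact fun h => hgcd (Nat.eq_of_beq_eq_true h)
        have : d = c := by
          rw [hb] at hs
          simpa using hs.symm
        subst this
        have hnp : ¬ (n + 1).Prime := fun h => hgcd (hP _ h (Nat.lt_succ_self n))
        refine ⟨?_, ?_⟩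
        · have := hg.1
          rw [if_neg hnp] at hsucc
          omega
        · exact mul_log_le_of_le (by positivity) (exp_one_le_of_three_le hn)
            (by exact_mod_cast Nat.le_succ n) hg.2
    refine ⟨by simpa using key, fun m h1 h2 => ?_⟩
    rw [pow_zero] at h2
    rcases Nat.lt_or_ge n m with h | h
    · have : m = n + 1 := by omega
      exact ⟨d, this ▸ key⟩
    · have : m = n := by omega
      exact ⟨c, this ▸ hg⟩
  | succ k ih =>
    intro n c d hn hP hg hs
    rw [scan, Option.bind_eq_some_iff] at hs
    obtain ⟨c', hc', hd⟩ := hs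
    obtain ⟨g1, r1⟩ := ih n c c' hn hP hg hc'
    obtain ⟨g2, r2⟩ := ih (n + 2 ^ k) c' d (hn.trans (Nat.le_add_right _ _))
      (fun p hp h => hP p hp (lt_of_le_of_lt (Nat.le_add_right _ _) h)) g1 hd
    have e : n + 2 ^ k + 2 ^ k = n + 2 ^ (k + 1) := by rw [pow_succ]; ring
    rw [e] at g2 r2
    refine ⟨g2, fun m h1 h2 => ?_⟩
    rcases le_total m (n + 2 ^ k) with h | h
    · exact r1 m h1 h
    · exact r2 m h h2

lemma gcd_eq_one_of_dvd_factorial {P N p : ℕ} (hP : P ∣ N.factorial) (hp : p.Prime) (h : N < p) :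
    Nat.gcd p P = 1 := by
  have : Nat.Coprime p N.factorial := by
    rw [Nat.Prime.coprime_iff_not_dvd hp, hp.dvd_factorial]; omega
  exact this.coprime_dvd_right hP

/-- `(π n + 1) log n ≤ n log 4` for `20 ≤ n ≤ 65812`. The two sieving moduli are the products of the
primes up to `17` and up to `256`. -/
lemma primeCounting_le_small {n : ℕ} (h1 : 20 ≤ n) (h2 : n ≤ 65812) :
    ((Nat.primeCounting n : ℝ) + 1) * Real.log n ≤ n * Real.log 4 := by
  have g0 : GoodBound 20 8 := by
    refine ⟨by decide +kernel, ?_⟩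
    have := mul_log_le_of_pow_le (n := 20) (c := 9) (by norm_num) (by norm_num)
    norm_num at this ⊢
    exact this
  obtain ⟨g1, r1⟩ := scan_spec 510510 8 20 8 58 (by norm_num)
    (fun p hp h => gcd_eq_one_of_dvd_factorial (N := 17) (by decide) hp (by omega)) g0
    (by decide +kernel)
  obtain ⟨-, r2⟩ := scan_spec
    64266330917908644872330635228106713310880186591609208114244758680898150367880703152525200743234420230
    16 276 58 6573 (by norm_num)
    (fun p hp h => gcd_eq_one_of_dvd_factorial (N := 256) (by decide +kernel) hp (by omega)) g1
    (by decide +kernel)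
  have key : ∃ e, GoodBound n e := by
    rcases le_total n 276 with h | h
    · exact r1 n h1 h
    · exact r2 n h h2
  obtain ⟨e, he1, he2⟩ := key
  refine le_trans (mul_le_mul_of_nonneg_right ?_ (Real.log_natCast_nonneg n)) he2
  exact_mod_cast Nat.succ_le_succ he1

/-! ### Chebyshev's estimate -/

open ArithmeticFunction in
/-- Legendre's identity `log N! = ∑ Λ(d) ⌊N / d⌋`, where the sum may run beyond `N`. -/
lemma log_factorial_eq (M N : ℕ) (h : N ≤ M) :
    Real.log (N.factorial : ℝ) = ∑ d ∈ Finset.Icc 1 M, vonMangoldt d * ((N / d : ℕ) : ℝ) := by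
  induction N with
  | zero => simp
  | succ n ih =>
    have hn : (n.factorial : ℝ) ≠ 0 := by exact_mod_cast n.factorial_ne_zero
    rw [Nat.factorial_succ, Nat.cast_mul, Real.log_mul (by positivity) hn, ih (by omega),
      ← vonMangoldt_sum]
    have hsub : (n + 1).divisors = (Finset.Icc 1 M).filter (fun d => d ∣ n + 1) := by
      ext d
      simp only [Nat.mem_divisors, Finset.mem_filter, Finset.mem_Icc]
      constructor
      · rintro ⟨h1, -⟩
        exact ⟨⟨Nat.pos_of_dvd_of_pos h1 (by omega), (Nat.le_of_dvd (by omega) h1).trans h⟩, h1⟩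
      · rintro ⟨-, h1⟩
        exact ⟨h1, by omega⟩
    rw [hsub, Finset.sum_filter, ← Finset.sum_add_distrib]
    refine Finset.sum_congr rfl fun d _ => ?_
    rw [Nat.succ_div]
    split_ifs <;> push_cast <;> ring

/-- Chebyshev's integer sequence `⌊q⌋ + ⌊q/30⌋ - ⌊q/2⌋ - ⌊q/3⌋ - ⌊q/5⌋` is nonnegative, and equals `1`
for `1 ≤ q < 6`. -/
lemma chebyshev_floor (q : ℕ) :
    q / 2 + q / 3 + q / 5 + (if 1 ≤ q ∧ q < 6 then 1 else 0) ≤ q + q / 30 := by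
  split_ifs with h
  · obtain ⟨h1, h2⟩ := h
    interval_cases q <;> norm_num
  · omega

open ArithmeticFunction in
/-- The logarithm of Chebyshev's integer `N! ⌊N/30⌋! / (⌊N/2⌋! ⌊N/3⌋! ⌊N/5⌋!)` is at least the sum of
`log p` over the primes in `(N / 6, N]`. -/
lemma sum_log_prime_le_chebyshev (N : ℕ) :
    ∑ p ∈ (Finset.Ioc (N / 6) N).filter Nat.Prime, Real.log p ≤
      Real.log (N.factorial : ℝ) + Real.log ((N / 30).factorial : ℝ)
        - Real.log ((N / 2).factorial : ℝ) - Real.log ((N / 3).factorial : ℝ)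
        - Real.log ((N / 5).factorial : ℝ) := by
  rw [log_factorial_eq N N le_rfl, log_factorial_eq N (N / 30) (Nat.div_le_self _ _),
    log_factorial_eq N (N / 2) (Nat.div_le_self _ _),
    log_factorial_eq N (N / 3) (Nat.div_le_self _ _),
    log_factorial_eq N (N / 5) (Nat.div_le_self _ _),
    ← Finset.sum_add_distrib, ← Finset.sum_sub_distrib, ← Finset.sum_sub_distrib,
    ← Finset.sum_sub_distrib]
  have h1 : ∑ p ∈ (Finset.Ioc (N / 6) N).filter Nat.Prime, Real.log p =
      ∑ p ∈ (Finset.Ioc (N / 6) N).filter Nat.Prime, vonMangoldt p :=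
    Finset.sum_congr rfl fun p hp => (vonMangoldt_apply_prime (Finset.mem_filter.1 hp).2).symm
  have h2 : ∑ p ∈ (Finset.Ioc (N / 6) N).filter Nat.Prime, vonMangoldt p ≤
      ∑ d ∈ Finset.Icc 1 N, if 1 ≤ N / d ∧ N / d < 6 then vonMangoldt d else 0 := by
    rw [← Finset.sum_filter]
    refine Finset.sum_le_sum_of_subset_of_nonneg ?_ fun _ _ _ => vonMangoldt_nonneg
    intro p hp
    simp only [Finset.mem_filter, Finset.mem_Ioc, Finset.mem_Icc] at hp ⊢
    obtain ⟨⟨h1, h2⟩, h3⟩ := hp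
    have hp0 := h3.pos
    refine ⟨⟨hp0, h2⟩, (Nat.one_le_div_iff hp0).2 h2, ?_⟩
    rw [Nat.div_lt_iff_lt_mul hp0]
    omega
  rw [h1]
  refine h2.trans (Finset.sum_le_sum fun d _ => ?_)
  have h3 : ∀ k, N / k / d = N / d / k := fun k => by
    rw [Nat.div_div_eq_div_mul, Nat.div_div_eq_div_mul, mul_comm]
  rw [h3, h3, h3, h3]
  have h4 := chebyshev_floor (N / d)
  have h5 : (((N / d / 2 + N / d / 3 + N / d / 5 +
      (if 1 ≤ N / d ∧ N / d < 6 then 1 else 0) : ℕ)) : ℝ) ≤ ((N / d + N / d / 30 : ℕ) : ℝ) :=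
    Nat.cast_le.2 h4
  have h6 : (0 : ℝ) ≤ vonMangoldt d := vonMangoldt_nonneg
  clear h3
  generalize N / d = q at *
  have h7 := mul_le_mul_of_nonneg_left h5 h6
  by_cases h : 1 ≤ q ∧ q < 6
  · rw [if_pos h] at h7 ⊢
    push_cast at h7
    linarith
  · rw [if_neg h] at h7 ⊢
    push_cast at h7
    linarith

lemma log_factorial_le {n : ℕ} (hn : 1 ≤ n) :
    Real.log (n.factorial : ℝ) ≤ n * Real.log n - n + Real.log n + 1 := by
  induction n, hn using Nat.le_induction with
  | base => simp
  | succ n hn ih =>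
    have hn0 : (0 : ℝ) < n := by exact_mod_cast hn
    have hf : (n.factorial : ℝ) ≠ 0 := by exact_mod_cast n.factorial_ne_zero
    rw [Nat.factorial_succ, Nat.cast_mul, Real.log_mul (by positivity) hf]
    push_cast
    have h1 := Real.one_sub_inv_le_log_of_pos (x := ((n : ℝ) + 1) / n) (by positivity)
    rw [Real.log_div (by positivity) hn0.ne'] at h1
    have h2 : (1 : ℝ) - (((n : ℝ) + 1) / n)⁻¹ = 1 / (n + 1) := by field_simp; ring
    rw [h2, div_le_iff₀ (by positivity)] at h1
    nlinarith

lemma le_log_factorial (n : ℕ) : n * Real.log n - n ≤ Real.log (n.factorial : ℝ) := by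
  rcases Nat.eq_zero_or_pos n with rfl | hn
  · simp
  have h0 : (0 : ℝ) < n := by exact_mod_cast hn
  have h1 := Real.pow_div_factorial_le_exp (n : ℝ) h0.le n
  have hf : (0 : ℝ) < n.factorial := by exact_mod_cast n.factorial_pos
  have h2 := Real.log_le_log (by positivity) h1
  rw [Real.log_exp, Real.log_div (by positivity) hf.ne', Real.log_pow] at h2
  linarith

lemma log_floor_factorial_le {x : ℝ} (hx : 1 ≤ x) :
    Real.log (⌊x⌋₊.factorial : ℝ) ≤ x * Real.log x - x + Real.log x + 1 := by
  have hn : 1 ≤ ⌊x⌋₊ := Nat.one_le_floor_iff x |>.2 hx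
  have hn' : (1 : ℝ) ≤ ⌊x⌋₊ := by exact_mod_cast hn
  have hle : (⌊x⌋₊ : ℝ) ≤ x := Nat.floor_le (by linarith)
  have h1 := log_factorial_le hn
  generalize (⌊x⌋₊ : ℝ) = n at *
  have h2 : Real.log n ≤ Real.log x := Real.log_le_log (by linarith) hle
  have h3 := Real.one_sub_inv_le_log_of_pos (x := x / n) (by positivity)
  rw [Real.log_div (by positivity) (by positivity), inv_div] at h3
  have h4 : x - n ≤ x * (Real.log x - Real.log n) := by
    have := mul_le_mul_of_nonneg_left h3 (by linarith : (0 : ℝ) ≤ x)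
    have e : x * (1 - n / x) = x - n := by field_simp
    linarith
  have h5 : 0 ≤ Real.log n := Real.log_nonneg hn'
  nlinarith

lemma le_log_floor_factorial {x : ℝ} (hx : 1 ≤ x) :
    x * Real.log x - x - Real.log x ≤ Real.log (⌊x⌋₊.factorial : ℝ) := by
  have hn : 1 ≤ ⌊x⌋₊ := Nat.one_le_floor_iff x |>.2 hx
  have hn' : (1 : ℝ) ≤ ⌊x⌋₊ := by exact_mod_cast hn
  have hle : (⌊x⌋₊ : ℝ) ≤ x := Nat.floor_le (by linarith)
  have hlt : x < ⌊x⌋₊ + 1 := Nat.lt_floor_add_one x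
  have h1 := le_log_factorial ⌊x⌋₊
  generalize (⌊x⌋₊ : ℝ) = n at *
  have h3 := Real.log_le_sub_one_of_pos (x := x / n) (by positivity)
  rw [Real.log_div (by positivity) (by positivity)] at h3
  have h4 : n * (Real.log x - Real.log n) ≤ x - n := by
    have := mul_le_mul_of_nonneg_left h3 (by linarith : (0 : ℝ) ≤ n)
    have e : n * (x / n - 1) = x - n := by field_simp
    linarith
  have h5 : 0 ≤ Real.log x := Real.log_nonneg hx
  nlinarith

lemma log_three_le : Real.log 3 ≤ 27 / 17 * Real.log 2 := by
  have h := Real.log_le_log (by norm_num) (by norm_num : (3 : ℝ) ^ 17 ≤ 2 ^ 27)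
  rw [Real.log_pow, Real.log_pow] at h
  push_cast at h
  linarith

lemma log_five_le : Real.log 5 ≤ 7 / 3 * Real.log 2 := by
  have h := Real.log_le_log (by norm_num) (by norm_num : (5 : ℝ) ^ 3 ≤ 2 ^ 7)
  rw [Real.log_pow, Real.log_pow] at h
  push_cast at h
  linarith

/-- Chebyshev's estimate for the primes in `(y / 6, y]`. The main term carries the constant
`(log 2) / 2 + (log 3) / 3 + (log 5) / 5 - (log 30) / 30`, bounded by `1.3321 log 2`. -/
lemma sum_log_prime_le {y : ℝ} (hy : 30 ≤ y) :
    ∑ p ∈ (Finset.Ioc ⌊y / 6⌋₊ ⌊y⌋₊).filter Nat.Prime, Real.log p ≤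
      1.3321 * Real.log 2 * y + 5 * Real.log y := by
  have h := sum_log_prime_le_chebyshev ⌊y⌋₊
  have e : ∀ k : ℕ, ⌊y⌋₊ / k = ⌊y / k⌋₊ := fun k => (Nat.floor_div_natCast y k).symm
  rw [e, e, e, e, e] at h
  push_cast at h
  have l6 := log_floor_factorial_le (x := y) (by linarith)
  have l30 := log_floor_factorial_le (x := y / 30) (by linarith)
  have l2 := le_log_floor_factorial (x := y / 2) (by linarith)
  have l3 := le_log_floor_factorial (x := y / 3) (by linarith)
  have l5 := le_log_floor_factorial (x := y / 5) (by linarith)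
  have hy0 : y ≠ 0 := by linarith
  have hlog30 : Real.log 30 = Real.log 2 + Real.log 3 + Real.log 5 := by
    rw [← Real.log_mul (by norm_num) (by norm_num), ← Real.log_mul (by norm_num) (by norm_num)]
    norm_num
  rw [Real.log_div hy0 (by norm_num), hlog30] at l30
  rw [Real.log_div hy0 (by norm_num)] at l2 l3 l5
  have a3 := log_three_le
  have a5 := log_five_le
  have p2 := Real.log_two_gt_d9
  have p3 : 0.69 ≤ Real.log 3 := by
    have := Real.log_le_log (by norm_num) (by norm_num : (2 : ℝ) ≤ 3)
    linarith
  have p5 : 2 * Real.log 2 ≤ Real.log 5 := by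
    have := Real.log_le_log (by norm_num) (by norm_num : (2 : ℝ) ^ 2 ≤ 5)
    rw [Real.log_pow] at this
    exact_mod_cast this
  have b3 : y * Real.log 3 ≤ y * (27 / 17 * Real.log 2) :=
    mul_le_mul_of_nonneg_left a3 (by linarith)
  have b5 : y * Real.log 5 ≤ y * (7 / 3 * Real.log 2) :=
    mul_le_mul_of_nonneg_left a5 (by linarith)
  have b2 : 0 ≤ y * Real.log 2 := mul_nonneg (by linarith) (by linarith)
  refine h.trans ?_
  nlinarith

/-! ### The bound `(π(y) + 1) log y ≤ 1.39 y` -/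

lemma primeCounting_eq_add_card {a b : ℕ} (h : a ≤ b) :
    Nat.primeCounting b = Nat.primeCounting a + ((Finset.Ioc a b).filter Nat.Prime).card := by
  induction b, h using Nat.le_induction with
  | base => simp
  | succ b hab ih =>
    have e : Finset.Ioc a (b + 1) = insert (b + 1) (Finset.Ioc a b) := by
      ext d
      simp only [Finset.mem_Ioc, Finset.mem_insert]
      omega
    rw [e, Finset.filter_insert]
    simp only [Nat.primeCounting, Nat.primeCounting', Nat.count_succ _ (b + 1)] at ih ⊢
    split_ifs with hp
    · rw [Finset.card_insert_of_notMem (by simp)]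
      omega
    · omega

/-- Chebyshev's estimate carries the bound for `π` from `y / 6` to `y`. -/
lemma primeCounting_step {y : ℝ} (hy : 65536 ≤ y)
    (h : ((Nat.primeCounting ⌊y / 6⌋₊ : ℝ) + 1) * Real.log (y / 6) ≤ y / 6 * Real.log 4) :
    ((Nat.primeCounting ⌊y⌋₊ : ℝ) + 1) * Real.log y ≤ y * Real.log 4 := by
  have hy0 : 0 < y := by linarith
  have hs := sum_log_prime_le (y := y) (by linarith)
  have hpi := primeCounting_eq_add_card (a := ⌊y / 6⌋₊) (b := ⌊y⌋₊)
    (Nat.floor_mono (by linarith))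
  have hcard : (((Finset.Ioc ⌊y / 6⌋₊ ⌊y⌋₊).filter Nat.Prime).card : ℝ) * Real.log (y / 6) ≤
      ∑ p ∈ (Finset.Ioc ⌊y / 6⌋₊ ⌊y⌋₊).filter Nat.Prime, Real.log p := by
    rw [← nsmul_eq_mul]
    refine Finset.card_nsmul_le_sum _ _ _ fun p hp => ?_
    simp only [Finset.mem_filter, Finset.mem_Ioc] at hp
    exact Real.log_le_log (by positivity) ((Nat.floor_lt (by positivity)).1 hp.1.1).le
  have hpi' : (Nat.primeCounting ⌊y⌋₊ : ℝ) = Nat.primeCounting ⌊y / 6⌋₊ +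
      ((Finset.Ioc ⌊y / 6⌋₊ ⌊y⌋₊).filter Nat.Prime).card := by exact_mod_cast hpi
  have l4 : Real.log 4 = 2 * Real.log 2 := by
    rw [← Real.log_rpow (by norm_num)]; norm_num
  have l6 : Real.log 6 ≤ 44 / 17 * Real.log 2 := by
    have : Real.log 6 = Real.log 2 + Real.log 3 := by
      rw [← Real.log_mul (by norm_num) (by norm_num)]; norm_num
    linarith [log_three_le]
  have p2 := Real.log_two_gt_d9
  have l65 : Real.log 65536 = 16 * Real.log 2 := by
    rw [show (65536 : ℝ) = 2 ^ 16 by norm_num, Real.log_pow]; norm_num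
  have hL : 16 * Real.log 2 ≤ Real.log y := by
    rw [← l65]; exact Real.log_le_log (by norm_num) hy
  have hLy : Real.log y ≤ 0.0002 * y := by
    have h1 := Real.log_le_sub_one_of_pos (x := y / 65536) (by positivity)
    rw [Real.log_div hy0.ne' (by norm_num), l65] at h1
    linarith [Real.log_two_lt_d9]
  have hld : Real.log (y / 6) = Real.log y - Real.log 6 := Real.log_div hy0.ne' (by norm_num)
  have hmain : ((Nat.primeCounting ⌊y⌋₊ : ℝ) + 1) * (Real.log y - Real.log 6) ≤
      (1.6655 * Real.log 2 + 0.001) * y := by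
    rw [← hld, hpi']
    rw [l4] at h
    nlinarith
  have hpos : 0 < Real.log y - Real.log 6 := by linarith
  -- Clearing `log y - log 6`, the claim is `(1.6655 log 2 + 0.001) log y ≤ log 4 (log y - log 6)`.
  have hnum : (1.6655 * Real.log 2 + 0.001) * Real.log y ≤
      Real.log 4 * (Real.log y - Real.log 6) := by
    rw [l4]
    have q : (0.3345 * Real.log 2 - 0.001) * (16 * Real.log 2) ≤
        (0.3345 * Real.log 2 - 0.001) * Real.log y :=
      mul_le_mul_of_nonneg_left hL (by linarith)
    nlinarith
  refine le_of_mul_le_mul_right ?_ hpos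
  calc ((Nat.primeCounting ⌊y⌋₊ : ℝ) + 1) * Real.log y * (Real.log y - Real.log 6)
      = ((Nat.primeCounting ⌊y⌋₊ : ℝ) + 1) * (Real.log y - Real.log 6) * Real.log y := by ring
    _ ≤ (1.6655 * Real.log 2 + 0.001) * y * Real.log y :=
        mul_le_mul_of_nonneg_right hmain (by linarith)
    _ = y * ((1.6655 * Real.log 2 + 0.001) * Real.log y) := by ring
    _ ≤ y * (Real.log 4 * (Real.log y - Real.log 6)) := mul_le_mul_of_nonneg_left hnum hy0.le
    _ = y * Real.log 4 * (Real.log y - Real.log 6) := by ring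

/-- The inequality `(π n + 1) log n ≤ D n` extends from `n` to the reals in `[n, n + 1)`. -/
lemma primeCounting_real_of_nat {D y : ℝ} (hy : 3 ≤ y)
    (h : ((Nat.primeCounting ⌊y⌋₊ : ℝ) + 1) * Real.log ⌊y⌋₊ ≤ ⌊y⌋₊ * D) :
    ((Nat.primeCounting ⌊y⌋₊ : ℝ) + 1) * Real.log y ≤ y * D :=
  mul_log_le_of_le (by positivity) (exp_one_le_of_three_le (Nat.le_floor (by exact_mod_cast hy)))
    (Nat.floor_le (by linarith)) h

lemma primeCounting_le_log_four {y : ℝ} (hy : 20 ≤ y) :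
    ((Nat.primeCounting ⌊y⌋₊ : ℝ) + 1) * Real.log y ≤ y * Real.log 4 := by
  have base : ∀ z : ℝ, 20 ≤ z → z ≤ 65536 →
      ((Nat.primeCounting ⌊z⌋₊ : ℝ) + 1) * Real.log z ≤ z * Real.log 4 := fun z h1 h2 =>
    primeCounting_real_of_nat (by linarith) (primeCounting_le_small
      (Nat.le_floor (by exact_mod_cast h1))
      ((Nat.floor_le_of_le (by exact_mod_cast h2 : z ≤ (65536 : ℕ))).trans (by norm_num)))
  have key : ∀ k : ℕ, ∀ z : ℝ, 20 ≤ z → z ≤ 65536 * 6 ^ k →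
      ((Nat.primeCounting ⌊z⌋₊ : ℝ) + 1) * Real.log z ≤ z * Real.log 4 := by
    intro k
    induction k with
    | zero => intro z h1 h2; exact base z h1 (by linarith)
    | succ k ih =>
      intro z h1 h2
      rcases le_total z 65536 with h | h
      · exact base z h1 h
      · refine primeCounting_step h (ih (z / 6) (by linarith) ?_)
        rw [pow_succ] at h2
        linarith
  obtain ⟨k, hk⟩ := pow_unbounded_of_one_lt y (by norm_num : (1 : ℝ) < 6)
  exact key k y hy (by linarith)

lemma log_four_le : Real.log 4 ≤ 1.39 := by
  have : Real.log 4 = 2 * Real.log 2 := by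
    rw [← Real.log_rpow (by norm_num)]; norm_num
  linarith [Real.log_two_lt_d9]

/-- Among the integers `n ≥ 3` only `n = 7`, where the two sides are `9.7296` and `9.73`, and
`n = 19`, where the inequality fails, violate `(π n + 1) log n ≤ n log 4`. -/
lemma primeCounting_le_139 {y : ℝ} (hy : 3 ≤ y) (h19 : ⌊y⌋₊ ≠ 19) :
    ((Nat.primeCounting ⌊y⌋₊ : ℝ) + 1) * Real.log y ≤ 1.39 * y := by
  rcases le_or_gt 20 y with h | h
  · have := primeCounting_le_log_four h
    nlinarith [log_four_le]
  rw [mul_comm 1.39 y]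
  refine primeCounting_real_of_nat hy ?_
  have h1 : 3 ≤ ⌊y⌋₊ := Nat.le_floor (by exact_mod_cast hy)
  have h2 : ⌊y⌋₊ < 20 := (Nat.floor_lt (by linarith)).2 (by exact_mod_cast h)
  generalize ⌊y⌋₊ = n at *
  rcases eq_or_ne n 7 with rfl | h7
  · have e : Nat.primeCounting 7 = 4 := by decide +kernel
    have l7 := Real.log_le_log (by norm_num)
      (by norm_num : (7 : ℝ) ^ 135 ≤ 2 ^ 200 * 2 ^ 179)
    rw [Real.log_pow, Real.log_mul (by positivity) (by positivity), Real.log_pow,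
      Real.log_pow] at l7
    rw [e]
    push_cast at l7 ⊢
    linarith [Real.log_two_lt_d9]
  · have hpow : n ^ (Nat.primeCounting n + 1) ≤ 4 ^ n := by
      have : ∀ m < 20, 3 ≤ m → m ≠ 7 → m ≠ 19 → m ^ (Nat.primeCounting m + 1) ≤ 4 ^ m := by
        decide +kernel
      exact this n h2 h1 h7 h19
    have := mul_log_le_of_pow_le (by omega) hpow
    push_cast at this
    exact this.trans (mul_le_mul_of_nonneg_left log_four_le (by positivity))

/-! ### The pointwise inequality -/

/-- The sum of `log p` over the prime powers `p ^ k ≤ T`, `k ≥ 1`, whose prime `p` is at most `N`. -/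
noncomputable def friablePsi (N T : ℕ) : ℝ :=
  ∑ p ∈ (Finset.range (N + 1)).filter Nat.Prime, (Nat.log p T : ℝ) * Real.log p

lemma natLog_mul_log_le {p T : ℕ} (hp : p.Prime) (hT : 1 ≤ T) :
    (Nat.log p T : ℝ) * Real.log p ≤ Real.log T := by
  rw [← Real.log_pow]
  have h := Nat.pow_log_le_self p (by omega : T ≠ 0)
  have h0 : 0 < p ^ Nat.log p T := pow_pos hp.pos _
  exact Real.log_le_log (by exact_mod_cast h0) (by exact_mod_cast h)

lemma friablePsi_le {N T : ℕ} (hT : 1 ≤ T) :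
    friablePsi N T ≤ Nat.primeCounting N * Real.log T := by
  have h := Finset.sum_le_card_nsmul ((Finset.range (N + 1)).filter Nat.Prime)
    (fun p => (Nat.log p T : ℝ) * Real.log p) (Real.log T)
    (fun p hp => natLog_mul_log_le (Finset.mem_filter.1 hp).2 hT)
  rw [nsmul_eq_mul] at h
  rwa [Nat.primeCounting, Nat.primeCounting', Nat.count_eq_card_filter_range]

lemma friablePsi_eq_of_le {N T : ℕ} (h : T ≤ N) : friablePsi N T = friablePsi T T := by
  refine (Finset.sum_subset ?_ ?_).symm
  · intro p hp
    simp only [Finset.mem_filter, Finset.mem_range] at hp ⊢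
    exact ⟨by omega, hp.2⟩
  · intro p hp hn
    simp only [Finset.mem_filter, Finset.mem_range] at hp hn
    rw [Nat.log_of_lt (by by_contra hc; exact hn ⟨by omega, hp.2⟩)]
    simp

lemma log_floor_le {t : ℝ} (ht : 1 ≤ t) : Real.log (⌊t⌋₊ : ℝ) ≤ Real.log t := by
  have hn : 1 ≤ ⌊t⌋₊ := Nat.one_le_floor_iff t |>.2 ht
  exact Real.log_le_log (by exact_mod_cast hn) (Nat.floor_le (by linarith))

lemma friablePsi_floor_le {N : ℕ} {t : ℝ} (ht : 1 ≤ t) :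
    friablePsi N ⌊t⌋₊ ≤ Nat.primeCounting N * Real.log t :=
  (friablePsi_le (Nat.one_le_floor_iff t |>.2 ht)).trans
    (mul_le_mul_of_nonneg_left (log_floor_le ht) (Nat.cast_nonneg _))

/-- For `t < 49` the squares of the primes from `7` on exceed `t`, which sharpens the trivial bound
`8 log t` for the primes up to `19`. -/
lemma friablePsi_nineteen {t : ℝ} (ht : 1 ≤ t) (ht' : t < 49) :
    friablePsi 19 ⌊t⌋₊ ≤ 3 * Real.log t + 12.83 := by
  have hT : 1 ≤ ⌊t⌋₊ := Nat.one_le_floor_iff t |>.2 ht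
  have hT' : ⌊t⌋₊ < 49 := (Nat.floor_lt (by linarith)).2 (by exact_mod_cast ht')
  have hl := log_floor_le ht
  have b1 : ∀ p : ℕ, p.Prime → (Nat.log p ⌊t⌋₊ : ℝ) * Real.log p ≤ Real.log t :=
    fun p hp => (natLog_mul_log_le hp hT).trans hl
  have b2 : ∀ p : ℕ, 7 ≤ p → (Nat.log p ⌊t⌋₊ : ℝ) * Real.log p ≤ Real.log p := by
    intro p hp
    have h1 : Nat.log p ⌊t⌋₊ < 2 := Nat.log_lt_of_lt_pow (by omega) (by nlinarith)
    have h2 : (Nat.log p ⌊t⌋₊ : ℝ) ≤ 1 := by exact_mod_cast Nat.lt_succ_iff.1 h1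
    have h3 : 0 ≤ Real.log (p : ℝ) := Real.log_natCast_nonneg p
    nlinarith
  have hset : (Finset.range (19 + 1)).filter Nat.Prime = {2, 3, 5, 7, 11, 13, 17, 19} := by
    decide +kernel
  have hprod : Real.log 7 + Real.log 11 + Real.log 13 + Real.log 17 + Real.log 19 ≤ 12.83 := by
    rw [← Real.log_mul (by norm_num) (by norm_num), ← Real.log_mul (by norm_num) (by norm_num),
      ← Real.log_mul (by norm_num) (by norm_num), ← Real.log_mul (by norm_num) (by norm_num)]
    have h := Real.log_le_log (by norm_num)
      (by norm_num : ((7 : ℝ) * 11 * 13 * 17 * 19) ^ 2 ≤ 2 ^ 37)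
    rw [Real.log_pow, Real.log_pow] at h
    push_cast at h
    generalize Real.log ((7 : ℝ) * 11 * 13 * 17 * 19) = l at h ⊢
    linarith [Real.log_two_lt_d9]
  rw [friablePsi, hset]
  have c2 := b1 2 (by norm_num)
  have c3 := b1 3 (by norm_num)
  have c5 := b1 5 (by norm_num)
  have c7 := b2 7 (by norm_num)
  have c11 := b2 11 (by norm_num)
  have c13 := b2 13 (by norm_num)
  have c17 := b2 17 (by norm_num)
  have c19 := b2 19 (by norm_num)
  simp only [Finset.sum_insert, Finset.sum_singleton, Finset.mem_insert, Finset.mem_singleton,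
    Nat.reduceEqDiff, or_false, not_false_eq_true]
  push_cast at c2 c3 c5 c7 c11 c13 c17 c19 ⊢
  linarith

/-- The range `19 ≤ y < 20`, where `(π y + 1) log y ≤ 1.39 y` fails by a small margin near `y = 19`: the
convexity of the exponential makes up for it when `t ≥ 49`, and the sharper bound for the sum does
otherwise. -/
lemma friablePsi_add_log_le_nineteen {y t : ℝ} (h19 : ⌊y⌋₊ = 19) (ht : y ≤ t) :
    friablePsi ⌊y⌋₊ ⌊t⌋₊ + Real.log t ≤ 1.39 * y * Real.exp (Real.log t / Real.log y - 1) := by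
  have hy0 : 0 ≤ y := by
    by_contra hc
    rw [Nat.floor_of_nonpos (by linarith)] at h19
    omega
  have hy : 19 ≤ y := by
    have := Nat.floor_le hy0
    rw [h19] at this
    exact_mod_cast this
  have hy20 : y < 20 := by
    have := Nat.lt_floor_add_one y
    rw [h19] at this
    push_cast at this
    linarith
  rw [h19]
  have hL : 0 < Real.log y := Real.log_pos (by linarith)
  have hl2 := Real.log_two_lt_d9
  have hlt : Real.log y ≤ Real.log t := Real.log_le_log (by linarith) ht
  set u := Real.log t / Real.log y with hu
  have hut : Real.log t = u * Real.log y := by rw [hu]; field_simp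
  have hu1 : 1 ≤ u := by rw [hu, le_div_iff₀ hL]; linarith
  have hl20 : Real.log y ≤ Real.log 20 := Real.log_le_log (by linarith) hy20.le
  have h20 : Real.log 20 ≤ 13 / 3 * Real.log 2 := by
    have : Real.log 20 = 2 * Real.log 2 + Real.log 5 := by
      rw [← Real.log_rpow (by norm_num), ← Real.log_mul (by norm_num) (by norm_num)]
      norm_num
    linarith [log_five_le]
  rcases lt_or_ge t 49 with h | h
  · have h1 := friablePsi_nineteen (by linarith) h
    have h2 : u ≤ Real.exp (u - 1) := by linarith [Real.add_one_le_exp (u - 1)]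
    have h3 : 1.39 * y * u ≤ 1.39 * y * Real.exp (u - 1) :=
      mul_le_mul_of_nonneg_left h2 (by linarith)
    have h4 : (12.83 + 4 * Real.log y) * u ≤ 1.39 * y * u :=
      mul_le_mul_of_nonneg_right (by linarith) (by linarith)
    nlinarith
  · have h1 := friablePsi_floor_le (N := 19) (t := t) (by linarith)
    have e : Nat.primeCounting 19 = 8 := by decide +kernel
    rw [e] at h1
    push_cast at h1
    have hu54 : 5 / 4 ≤ u := by
      rw [hu, le_div_iff₀ hL]
      have h49 : Real.log 49 ≤ Real.log t := Real.log_le_log (by norm_num) h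
      have h5 := Real.log_le_log (by norm_num) (by norm_num : (20 : ℝ) ^ 5 ≤ 49 ^ 4)
      rw [Real.log_pow, Real.log_pow] at h5
      push_cast at h5
      linarith
    have h9 : 9 * Real.log y ≤ y * 1.41 := by
      refine mul_log_le_of_le (by norm_num) (a := 19)
        (by linarith [Real.exp_one_lt_d9]) hy ?_
      have h5 := Real.log_le_log (by norm_num) (by norm_num : (19 : ℝ) ^ 4 ≤ 2 ^ 17)
      rw [Real.log_pow, Real.log_pow] at h5
      push_cast at h5
      linarith
    have h6 := Real.quadratic_le_exp_of_nonneg (x := u - 1) (by linarith)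
    have h7 : 1.41 * u ≤ 1.39 * Real.exp (u - 1) := by nlinarith
    have h8 : y * (1.41 * u) ≤ y * (1.39 * Real.exp (u - 1)) :=
      mul_le_mul_of_nonneg_left h7 hy0
    have h10 : 9 * Real.log y * u ≤ y * 1.41 * u :=
      mul_le_mul_of_nonneg_right h9 (by linarith)
    nlinarith

lemma friablePsi_add_log_le_exp {y t : ℝ} (hy : 3 ≤ y) (ht : y ≤ t) :
    friablePsi ⌊y⌋₊ ⌊t⌋₊ + Real.log t ≤ 1.39 * y * Real.exp (Real.log t / Real.log y - 1) := by
  rcases eq_or_ne ⌊y⌋₊ 19 with h19 | h19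
  · exact friablePsi_add_log_le_nineteen h19 ht
  have hL : 0 < Real.log y := Real.log_pos (by linarith)
  have hlt : Real.log y ≤ Real.log t := Real.log_le_log (by linarith) ht
  have h1 := friablePsi_floor_le (N := ⌊y⌋₊) (t := t) (by linarith)
  have h2 := primeCounting_le_139 hy h19
  set u := Real.log t / Real.log y with hu
  have hut : Real.log t = u * Real.log y := by rw [hu]; field_simp
  have hu1 : 1 ≤ u := by rw [hu, le_div_iff₀ hL]; linarith
  calc friablePsi ⌊y⌋₊ ⌊t⌋₊ + Real.log t
      ≤ ((Nat.primeCounting ⌊y⌋₊ : ℝ) + 1) * Real.log y * u := by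
        rw [hut] at h1 ⊢
        linarith
    _ ≤ 1.39 * y * u := mul_le_mul_of_nonneg_right h2 (by linarith)
    _ ≤ 1.39 * y * Real.exp (u - 1) :=
        mul_le_mul_of_nonneg_left (by linarith [Real.add_one_le_exp (u - 1)]) (by linarith)

/-- The pointwise inequality behind the theorem, applied with `t = x / m` for friable `m`. -/
lemma friablePsi_add_log_le {y t σ : ℝ} (hy : 3 ≤ y) (ht : 1 ≤ t)
    (hσ1 : 1 / Real.log y ≤ σ) (hσ2 : σ ≤ 1) :
    friablePsi ⌊y⌋₊ ⌊t⌋₊ + Real.log t ≤ 1.39 * (y ^ (1 - σ) * t ^ σ) := by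
  have hy0 : 0 < y := by linarith
  have ht0 : 0 < t := by linarith
  have hL : 0 < Real.log y := Real.log_pos (by linarith)
  have hexp : y ^ (1 - σ) * t ^ σ = y * Real.exp (σ * (Real.log t - Real.log y)) := by
    rw [Real.rpow_def_of_pos hy0, Real.rpow_def_of_pos ht0, ← Real.exp_add]
    conv_rhs => rw [← Real.exp_log hy0, Real.log_exp, ← Real.exp_add]
    congr 1; ring
  rcases le_or_gt y t with h | h
  · refine (friablePsi_add_log_le_exp hy h).trans ?_
    rw [hexp, ← mul_assoc]
    refine mul_le_mul_of_nonneg_left (Real.exp_le_exp.2 ?_) (by linarith)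
    have h1 : 0 ≤ Real.log t - Real.log y := by
      linarith [Real.log_le_log hy0 h]
    have h2 := mul_le_mul_of_nonneg_right hσ1 h1
    have h3 : 1 / Real.log y * (Real.log t - Real.log y) = Real.log t / Real.log y - 1 := by
      field_simp
    linarith
  · -- Here `t ^ (1 - σ) ≤ y ^ (1 - σ)`, so that the right-hand side is at least `1.39 t`.
    have hge : t ≤ y ^ (1 - σ) * t ^ σ := by
      calc t = t ^ (1 - σ) * t ^ σ := by
            rw [← Real.rpow_add ht0, sub_add_cancel, Real.rpow_one]
        _ ≤ y ^ (1 - σ) * t ^ σ :=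
            mul_le_mul_of_nonneg_right
              (Real.rpow_le_rpow ht0.le h.le (by linarith)) (Real.rpow_nonneg ht0.le _)
    rw [friablePsi_eq_of_le (Nat.floor_mono h.le)]
    refine le_trans ?_ (mul_le_mul_of_nonneg_left hge (by norm_num))
    rcases le_or_gt 3 t with h3 | h3
    · have h1 := friablePsi_add_log_le_exp h3 le_rfl
      rwa [div_self (Real.log_pos (by linarith)).ne', sub_self, Real.exp_zero, mul_one] at h1
    · have h1 := friablePsi_floor_le (N := ⌊t⌋₊) ht
      rcases lt_or_ge t 2 with h2 | h2
      · have e : ⌊t⌋₊ = 1 := by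
          rw [Nat.floor_eq_iff ht0.le]; norm_num; exact ⟨ht, h2⟩
        have e' : Nat.primeCounting 1 = 0 := by decide +kernel
        rw [e] at h1 ⊢
        rw [e'] at h1
        push_cast at h1
        linarith [Real.log_le_sub_one_of_pos ht0]
      · have e : ⌊t⌋₊ = 2 := by
          rw [Nat.floor_eq_iff ht0.le]; norm_num; exact ⟨h2, h3⟩
        have e' : Nat.primeCounting 2 = 1 := by decide +kernel
        rw [e] at h1 ⊢
        rw [e'] at h1
        push_cast at h1
        have h4 := Real.log_le_sub_one_of_pos (x := t / 2) (by positivity)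
        rw [Real.log_div ht0.ne' (by norm_num)] at h4
        linarith [Real.log_two_lt_d9]

/-! ### Summation over friable numbers -/

open ArithmeticFunction in
lemma sum_vonMangoldt_le_friablePsi (N T : ℕ) :
    ∑ d ∈ (Finset.Icc 1 T).filter (fun d => ∀ p ∈ d.primeFactors, p ≤ N), vonMangoldt d ≤
      friablePsi N T := by
  set PR := (Finset.range (N + 1)).filter Nat.Prime with hPR
  set B := PR.sigma (fun p => Finset.Icc 1 (Nat.log p T)) with hB
  have hsum : friablePsi N T = ∑ b ∈ B, vonMangoldt (b.1 ^ b.2) := by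
    rw [hB, Finset.sum_sigma, friablePsi]
    refine Finset.sum_congr rfl fun p hp => ?_
    have hpp := (Finset.mem_filter.1 hp).2
    rw [Finset.sum_congr rfl (g := fun _ => Real.log p) (fun k hk => ?_)]
    · simp
    · rw [vonMangoldt_apply_pow (Nat.one_le_iff_ne_zero.1 (Finset.mem_Icc.1 hk).1),
        vonMangoldt_apply_prime hpp]
  have hinj : Set.InjOn (fun b : (_ : ℕ) × ℕ => b.1 ^ b.2) (B : Set ((_ : ℕ) × ℕ)) := by
    rintro ⟨p, k⟩ h1 ⟨q, l⟩ h2 h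
    simp only [hB, hPR, Finset.coe_sigma, Set.mem_sigma_iff, Finset.mem_coe, Finset.mem_filter,
      Finset.mem_Icc] at h1 h2
    obtain ⟨rfl, rfl⟩ := Nat.Prime.pow_inj' h1.1.2 h2.1.2
      (Nat.one_le_iff_ne_zero.1 h1.2.1) (Nat.one_le_iff_ne_zero.1 h2.2.1) h
    rfl
  rw [hsum, ← Finset.sum_image hinj (f := fun d => vonMangoldt d), ← Finset.sum_filter_of_ne
    (p := fun d => IsPrimePow d) (fun d _ h => vonMangoldt_ne_zero_iff.1 h)]
  refine Finset.sum_le_sum_of_subset_of_nonneg ?_ fun _ _ _ => vonMangoldt_nonneg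
  intro d hd
  simp only [Finset.mem_filter, Finset.mem_Icc] at hd
  obtain ⟨⟨⟨h1, h2⟩, h3⟩, h4⟩ := hd
  obtain ⟨p, k, hp, hk, rfl⟩ := (isPrimePow_nat_iff d).1 h4
  rw [Nat.primeFactors_prime_pow hk.ne' hp] at h3
  have hpN := h3 p (by simp)
  simp only [Finset.mem_image, hB, hPR, Finset.mem_sigma, Finset.mem_filter, Finset.mem_range,
    Finset.mem_Icc]
  exact ⟨⟨p, k⟩, ⟨⟨Nat.lt_succ_of_le hpN, hp⟩, hk, Nat.le_log_of_pow_le hp.one_lt h2⟩, rfl⟩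

open ArithmeticFunction in
/-- Writing `log n = ∑ Λ(d)` over the divisors `d` of `n`, and `n = d m`. -/
lemma sum_log_friable_le (N X : ℕ) :
    ∑ n ∈ (Finset.Icc 1 X).filter (fun n => ∀ p ∈ n.primeFactors, p ≤ N), Real.log n ≤
      ∑ m ∈ (Finset.Icc 1 X).filter (fun n => ∀ p ∈ n.primeFactors, p ≤ N),
        friablePsi N (X / m) := by
  set S := (Finset.Icc 1 X).filter (fun n => ∀ p ∈ n.primeFactors, p ≤ N) with hS
  refine le_trans ?_ (Finset.sum_le_sum fun m _ => sum_vonMangoldt_le_friablePsi N (X / m))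
  simp_rw [← vonMangoldt_sum]
  rw [Finset.sum_sigma', Finset.sum_sigma']
  have hinj : Set.InjOn (fun b : (_ : ℕ) × ℕ => (⟨b.1 / b.2, b.2⟩ : (_ : ℕ) × ℕ))
      ((S.sigma fun n => n.divisors : Finset ((_ : ℕ) × ℕ)) : Set ((_ : ℕ) × ℕ)) := by
    rintro ⟨n, d⟩ h1 ⟨n', d'⟩ h2 h
    simp only [Finset.coe_sigma, Set.mem_sigma_iff, Finset.mem_coe, Nat.mem_divisors] at h1 h2
    simp only [Sigma.mk.injEq, heq_eq_eq] at h
    obtain ⟨h3, rfl⟩ := h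
    have : n = n' := by
      rw [← Nat.div_mul_cancel h1.2.1, ← Nat.div_mul_cancel h2.2.1, h3]
    rw [this]
  rw [← Finset.sum_image hinj (f := fun b : (_ : ℕ) × ℕ => vonMangoldt b.2)]
  refine Finset.sum_le_sum_of_subset_of_nonneg ?_ fun _ _ _ => vonMangoldt_nonneg
  rintro ⟨m, d⟩ hb
  simp only [Finset.mem_image, Finset.mem_sigma, hS, Finset.mem_filter, Finset.mem_Icc,
    Nat.mem_divisors] at hb ⊢
  obtain ⟨⟨n, e⟩, ⟨⟨⟨h1, h2⟩, h3⟩, h4, h5⟩, h6⟩ := hb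
  simp only [Sigma.mk.injEq, heq_eq_eq] at h6
  obtain ⟨rfl, rfl⟩ := h6
  dsimp only at h1 h2 h3 h4 h5
  have hm0 : 0 < n / e := Nat.div_pos (Nat.le_of_dvd h1 h4) (Nat.pos_of_dvd_of_pos h4 h1)
  refine ⟨⟨⟨hm0, (Nat.div_le_self _ _).trans h2⟩, fun p hp => ?_⟩,
    ⟨Nat.pos_of_dvd_of_pos h4 h1, ?_⟩, fun p hp => ?_⟩
  · exact h3 p (Nat.primeFactors_mono (Nat.div_dvd_of_dvd h4) h5 hp)
  · rw [Nat.le_div_iff_mul_le hm0, Nat.mul_div_cancel' h4]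
    exact h2
  · exact h3 p (Nat.primeFactors_mono h4 h5 hp)

/-- The Euler product dominates any partial sum of the Dirichlet series over friable numbers. -/
lemma sum_rpow_le_zetaR {σ y : ℝ} (hσ : 0 < σ) (X : ℕ) :
    ∑ n ∈ (Finset.Icc 1 X).filter (fun n => ∀ p ∈ n.primeFactors, p ≤ ⌊y⌋₊),
      (n : ℝ) ^ (-σ) ≤ zetaR σ y := by
  let f : ℕ →* ℝ :=
    { toFun := fun n => (n : ℝ) ^ (-σ)
      map_one' := by simp
      map_mul' := fun a b => by
        push_cast
        exact Real.mul_rpow (Nat.cast_nonneg a) (Nat.cast_nonneg b) }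
  have hf : ∀ {p : ℕ}, p.Prime → ‖f p‖ < 1 := by
    intro p hp
    change ‖(p : ℝ) ^ (-σ)‖ < 1
    rw [Real.norm_of_nonneg (by positivity)]
    exact Real.rpow_lt_one_of_one_lt_of_neg (by exact_mod_cast hp.one_lt) (by linarith)
  have h := (EulerProduct.summable_and_hasSum_factoredNumbers_prod_filter_prime_geometric hf
    (Finset.range (⌊y⌋₊ + 1))).2
  set S := (Finset.Icc 1 X).filter (fun n => ∀ p ∈ n.primeFactors, p ≤ ⌊y⌋₊) with hS
  have hmem : ∀ n ∈ S, n ∈ Nat.factoredNumbers (Finset.range (⌊y⌋₊ + 1)) := by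
    intro n hn
    simp only [hS, Finset.mem_filter, Finset.mem_Icc] at hn
    refine Nat.mem_factoredNumbers_of_primeFactors_subset (by omega) fun p hp => ?_
    have := hn.2 p hp
    exact Finset.mem_range.2 (by omega)
  have h2 := sum_le_hasSum (S.subtype (· ∈ Nat.factoredNumbers (Finset.range (⌊y⌋₊ + 1))))
    (fun m _ => by
      change (0 : ℝ) ≤ ((m : ℕ) : ℝ) ^ (-σ)
      positivity) h
  rw [Finset.sum_subtype_of_mem (fun n => f n) hmem] at h2
  exact h2

theorem stmt_17 (x y σ : ℝ) (hy : 3 ≤ y) (hyx : y ≤ x)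
    (hσ1 : 1 / Real.log y ≤ σ) (hσ2 : σ ≤ 1) :
    (Psi x y : ℝ) ≤ 1.39 * (y ^ (1 - σ) / Real.log x) * x ^ σ * zetaR σ y := by
  have hx0 : 0 < x := by linarith
  have hlogx : 0 < Real.log x := Real.log_pos (by linarith)
  have hσ0 : 0 < σ := lt_of_lt_of_le (one_div_pos.2 (Real.log_pos (by linarith))) hσ1
  set S := (Finset.Icc 1 ⌊x⌋₊).filter (fun n => ∀ p ∈ n.primeFactors, p ≤ ⌊y⌋₊) with hS
  have hPsi : Psi x y = S.card := by
    rw [Psi, hS]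
    congr 1
    refine Finset.filter_congr fun n _ => forall₂_congr fun p _ => ?_
    exact (Nat.le_floor_iff (by linarith)).symm
  have hmain : (S.card : ℝ) * Real.log x ≤
      1.39 * y ^ (1 - σ) * x ^ σ * zetaR σ y := by
    calc (S.card : ℝ) * Real.log x = ∑ n ∈ S, Real.log n + ∑ n ∈ S, Real.log (x / n) := by
          rw [← Finset.sum_add_distrib, ← nsmul_eq_mul, ← Finset.sum_const]
          refine Finset.sum_congr rfl fun n hn => ?_
          have hn1 : 1 ≤ n := (Finset.mem_Icc.1 (Finset.mem_filter.1 hn).1).1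
          rw [Real.log_div hx0.ne' (by positivity)]
          ring
      _ ≤ ∑ m ∈ S, friablePsi ⌊y⌋₊ (⌊x⌋₊ / m) + ∑ n ∈ S, Real.log (x / n) :=
          add_le_add_left (sum_log_friable_le ⌊y⌋₊ ⌊x⌋₊) _
      _ = ∑ m ∈ S, (friablePsi ⌊y⌋₊ ⌊x / m⌋₊ + Real.log (x / m)) := by
          rw [← Finset.sum_add_distrib]
          refine Finset.sum_congr rfl fun m _ => ?_
          rw [Nat.floor_div_natCast]
      _ ≤ ∑ m ∈ S, 1.39 * y ^ (1 - σ) * x ^ σ * (m : ℝ) ^ (-σ) := by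
          refine Finset.sum_le_sum fun m hm => ?_
          have hm1 := Finset.mem_Icc.1 (Finset.mem_filter.1 hm).1
          have hm0 : (0 : ℝ) < m := by exact_mod_cast hm1.1
          have hmx : (m : ℝ) ≤ x := (Nat.le_floor_iff hx0.le).1 hm1.2
          refine (friablePsi_add_log_le hy ((one_le_div hm0).2 hmx) hσ1 hσ2).trans_eq ?_
          rw [Real.div_rpow hx0.le hm0.le, Real.rpow_neg hm0.le]
          ring
      _ = 1.39 * y ^ (1 - σ) * x ^ σ * ∑ m ∈ S, (m : ℝ) ^ (-σ) := by rw [Finset.mul_sum]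
      _ ≤ 1.39 * y ^ (1 - σ) * x ^ σ * zetaR σ y :=
          mul_le_mul_of_nonneg_left (sum_rpow_le_zetaR hσ0 _) (by positivity)
  rw [hPsi]
  have e : 1.39 * (y ^ (1 - σ) / Real.log x) * x ^ σ * zetaR σ y =
      1.39 * y ^ (1 - σ) * x ^ σ * zetaR σ y / Real.log x := by ring
  rw [e, le_div_iff₀ hlogx]
  exact hmain
end
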